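/- arXiv:1508.05442 — 6 statements merged into one kernel-verified Lean document; each statement's English description precedes it below -/
import Mathlib

section
/- Let −∞ ≤ a < b ≤ ∞ and let X = A + iB ∈ B(H), where A and B are bounded self-adjoint operators on H and the spectrum of A is contained in the open interval (a, b). Then the spectrum of X is contained in (ℂ ∖ ℝ) ∪ (a, b). -/
open ContinuousLinearMap MeasureTheory

variable {H : Type*} [NormedAddCommGroup H] [InnerProductSpace ℂ H] [CompleteSpace H]

theorem key_aux (C B : H →L[ℂ] H) (hC : IsSelfAdjoint C) (hB : IsSelfAdjoint B)
    (h : ∀ z ∈ spectrum ℂ C, 0 < z.re) : IsUnit (C + Complex.I • B) := by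
  have h0 : 0 ≤ C := by
    rw [StarOrderedRing.nonneg_iff_spectrum_nonneg (R := ℝ) C hC]
    intro x hx
    have := h _ (spectrum.algebraMap_mem ℂ hx)
    simpa using this.le
  have hu : IsUnit C := by
    rw [← spectrum.zero_notMem_iff ℂ]
    intro hz
    simpa using h 0 hz
  have hs : IsUnit (CFC.sqrt C) := (CFC.isUnit_sqrt_iff C h0).2 hu
  have hss := CFC.sqrt_mul_sqrt_self C h0
  have hsa : IsSelfAdjoint (CFC.sqrt C) := IsSelfAdjoint.of_nonneg (CFC.sqrt_nonneg C)
  obtain ⟨u, hU⟩ := hs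
  rw [← hU] at hss hsa
  have hui : star (↑u⁻¹ : H →L[ℂ] H) = ↑u⁻¹ := by
    have : star u = u := Units.ext hsa
    rw [← Units.coe_star_inv, this]
  set D : H →L[ℂ] H := ↑u⁻¹ * B * ↑u⁻¹ with hD
  have hDs : IsSelfAdjoint D := by
    rw [IsSelfAdjoint, hD, star_mul, star_mul, hui, hB.star_eq, mul_assoc]
  have e2 : (u : H →L[ℂ] H) * D * u = B := by
    simp [hD, mul_assoc]
  have hDm : IsUnit (1 + Complex.I • D) := by
    have := IsUnit.mul (IsUnit.map (algebraMap ℂ (H →L[ℂ] H)) (Complex.I_ne_zero.isUnit))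
      ((IsUnit.neg (by
        by_contra hn
        have := hDs.im_eq_zero_of_mem_spectrum (z := Complex.I) hn
        simp at this) : IsUnit (-(algebraMap ℂ (H →L[ℂ] H) Complex.I - D))))
    convert this using 1
    rw [neg_sub, mul_sub, ← map_mul, Complex.I_mul_I, ← Algebra.smul_def]
    simp [add_comm]
  have e : C + Complex.I • B = u * (1 + Complex.I • D) * u := by
    rw [mul_add, add_mul, mul_one, hss, mul_smul_comm, smul_mul_assoc, e2]
  rw [e]
  exact (u.isUnit.mul hDm).mul u.isUnit

/-- If `X = A + iB` with `A, B` bounded self-adjoint and the spectrum of `A` contained in the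
open interval `(a, b)` (with `-∞ ≤ a < b ≤ ∞`), then the spectrum of `X` is contained in
`(ℂ ∖ ℝ) ∪ (a, b)`. -/
theorem stmt1 [TopologicalSpace.SeparableSpace H] (hinf : ¬ FiniteDimensional ℂ H)
    (a b : EReal) (hab : a < b)
    (A B X : H →L[ℂ] H) (hA : IsSelfAdjoint A) (hB : IsSelfAdjoint B)
    (hspA : spectrum ℂ A ⊆ (fun x : ℝ => (x : ℂ)) '' {x : ℝ | a < (x : EReal) ∧ (x : EReal) < b})
    (hX : X = A + Complex.I • B) :
    spectrum ℂ X ⊆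
      {z : ℂ | z.im ≠ 0} ∪
        ((fun x : ℝ => (x : ℂ)) '' {x : ℝ | a < (x : EReal) ∧ (x : EReal) < b}) := by
  intro z hz
  by_contra hn
  simp only [Set.mem_union, Set.mem_ofPred_eq, not_or, not_not] at hn
  obtain ⟨him, hn⟩ := hn
  have hzr : ((z.re : ℝ) : ℂ) = z := Complex.ext rfl (by simp [him])
  have hsz : IsSelfAdjoint (algebraMap ℂ (H →L[ℂ] H) z) := by
    rw [← hzr]
    exact IsSelfAdjoint.algebraMap _ (Complex.conj_ofReal _)
  apply hz
  rw [hX, spectrum.mem_resolventSet_iff]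
  by_cases hlt : a < (z.re : EReal)
  · have hbz : b ≤ (z.re : EReal) := by
      by_contra hc
      exact hn ⟨z.re, ⟨hlt, not_le.1 hc⟩, hzr⟩
    have := key_aux (algebraMap ℂ (H →L[ℂ] H) z - A) (-B) (hsz.sub hA) hB.neg (by
      intro w hw
      have hw' : z - w ∈ spectrum ℂ A := by
        intro hu
        apply hw
        rw [spectrum.mem_resolventSet_iff] at hu ⊢
        convert hu.neg using 1
        rw [map_sub]; abel
      obtain ⟨x, ⟨-, hx⟩, hxe⟩ := hspA hw'
      have h1 := EReal.coe_lt_coe_iff.1 (hx.trans_le hbz)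
      have h2 := congrArg Complex.re hxe
      simp at h2
      linarith)
    convert this using 1
    rw [smul_neg]; abel
  · have hza : (z.re : EReal) ≤ a := not_lt.1 hlt
    have := key_aux (A - algebraMap ℂ (H →L[ℂ] H) z) B (hA.sub hsz) hB (by
      intro w hw
      have hw' : z + w ∈ spectrum ℂ A := by
        intro hu
        apply hw
        rw [spectrum.mem_resolventSet_iff] at hu ⊢
        convert hu using 1
        rw [map_add]; abel
      obtain ⟨x, ⟨hx, -⟩, hxe⟩ := hspA hw'
      have h1 := EReal.coe_lt_coe_iff.1 (hza.trans_lt hx)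
      have h2 := congrArg Complex.re hxe
      simp at h2
      linarith)
    convert this.neg using 1
    abel
end

section
/- Let k ∈ ℕ and let P be a polynomial with real coefficients of degree at most k. Then for all bounded self-adjoint operators A, B on H, Re P(A + iB) = Σ_{m=0}^{⌊k/2⌋} ((−1)^m / (2m)!) · D^{2m}P(A;B), where D^{m}P(A;B) denotes the m-th derivative at t = 0 of the map t ↦ P(A + tB) from ℝ to B(H), and P is evaluated on operators via the canonical algebra homomorphism from real polynomials to B(H). -/
open ContinuousLinearMap MeasureTheory

variable {H : Type*} [NormedAddCommGroup H] [InnerProductSpace ℂ H] [CompleteSpace H]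

/-- The real part `(Y + Y*)/2` of a bounded operator. -/
noncomputable def opRe (Y : H →L[ℂ] H) : H →L[ℂ] H := (2 : ℂ)⁻¹ • (Y + star Y)

/-- Evaluation of a real polynomial on a bounded operator, via the canonical algebra
homomorphism (coefficients are mapped into `ℂ`). -/
noncomputable def polyEval (P : Polynomial ℝ) (Y : H →L[ℂ] H) : H →L[ℂ] H :=
  Polynomial.aeval Y (P.map Complex.ofRealHom)

theorem poly_expand (k : ℕ) (P : Polynomial ℝ) (hP : P.natDegree ≤ k) (A B : H →L[ℂ] H) :
    ∃ c : ℕ → (H →L[ℂ] H), ∀ z : ℂ, polyEval P (A + z • B) =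
      ∑ j ∈ Finset.range (2 * (k / 2 + 1)), z ^ j • c j := by
  classical
  let F : Polynomial (H →L[ℂ] H) := ∑ n ∈ Finset.range (k + 1),
    Polynomial.C (algebraMap ℂ (H →L[ℂ] H) (P.coeff n : ℂ)) *
      (Polynomial.C A + Polynomial.C B * Polynomial.X) ^ n
  have hF : F.natDegree ≤ k := by
    apply Polynomial.natDegree_sum_le_of_forall_le
    intro n hn
    have hn' : n ≤ k := by simpa [Nat.lt_succ_iff] using hn
    refine (Polynomial.natDegree_C_mul_le _ _).trans ?_
    refine Polynomial.natDegree_pow_le.trans ?_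
    have h1 : (Polynomial.C A + Polynomial.C B * Polynomial.X).natDegree ≤ 1 := by
      compute_degree
    calc _ ≤ n * 1 := Nat.mul_le_mul_left _ h1
      _ ≤ k := by omega
  refine ⟨fun j => F.coeff j, fun z => ?_⟩
  have hc : ∀ a : H →L[ℂ] H, Commute (RingHom.id (H →L[ℂ] H) a) (algebraMap ℂ (H →L[ℂ] H) z) :=
    fun a => (Algebra.commutes z a).symm
  have h1 : Polynomial.eval₂RingHom' (RingHom.id (H →L[ℂ] H)) (algebraMap ℂ (H →L[ℂ] H) z) hc F
      = ∑ j ∈ Finset.range (2 * (k / 2 + 1)), z ^ j • F.coeff j := by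
    change Polynomial.eval₂ _ _ F = _
    rw [Polynomial.eval₂_eq_sum_range' _ (n := 2 * (k / 2 + 1)) (by omega)]
    refine Finset.sum_congr rfl fun j _ => ?_
    rw [← map_pow, ← Algebra.commutes, ← Algebra.smul_def]; rfl
  have hX : Polynomial.eval₂RingHom' (RingHom.id (H →L[ℂ] H)) (algebraMap ℂ (H →L[ℂ] H) z) hc
      Polynomial.X = algebraMap ℂ (H →L[ℂ] H) z := Polynomial.eval₂_X _ _
  have hC : ∀ a, Polynomial.eval₂RingHom' (RingHom.id (H →L[ℂ] H)) (algebraMap ℂ (H →L[ℂ] H) z) hc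
      (Polynomial.C a) = a := fun a => Polynomial.eval₂_C _ _
  rw [← h1, polyEval, Polynomial.aeval_eq_sum_range' (n := k + 1)
    (lt_of_le_of_lt Polynomial.natDegree_map_le (by omega)), map_sum]
  refine Finset.sum_congr rfl fun n _ => ?_
  rw [map_mul, map_pow, map_add, map_mul, hX, hC, hC, hC, ← Algebra.commutes z B,
    ← Algebra.smul_def, ← Algebra.smul_def, Polynomial.coeff_map]
  rfl

theorem star_polyEval (P : Polynomial ℝ) (Y : H →L[ℂ] H) :
    star (polyEval P Y) = polyEval P (star Y) := by
  simp only [polyEval, Polynomial.aeval_eq_sum_range, star_sum, star_smul, star_pow,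
    Polynomial.coeff_map]
  simp

theorem sum_even_odd {M : Type*} [AddCommMonoid M] (g : ℕ → M) (n : ℕ) :
    ∑ j ∈ Finset.range (2 * n), g j = ∑ m ∈ Finset.range n, (g (2 * m) + g (2 * m + 1)) := by
  induction n with
  | zero => simp
  | succ n ih =>
    rw [Finset.sum_range_succ, ← ih, Nat.mul_succ, Finset.sum_range_succ, Finset.sum_range_succ,
      add_assoc]

/-- For a real polynomial `P` of degree at most `k` and bounded self-adjoint `A, B`,
`Re P(A+iB) = Σ_{m=0}^{⌊k/2⌋} ((−1)^m/(2m)!) D^{2m}P(A;B)`, where `D^m P(A;B)` is the `m`-th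
derivative at `t = 0` of `t ↦ P(A + tB)`. -/
theorem stmt2 [TopologicalSpace.SeparableSpace H] (hinf : ¬ FiniteDimensional ℂ H)
    (k : ℕ) (P : Polynomial ℝ) (hP : P.natDegree ≤ k)
    (A B : H →L[ℂ] H) (hA : IsSelfAdjoint A) (hB : IsSelfAdjoint B) :
    opRe (polyEval P (A + Complex.I • B)) =
      ∑ m ∈ Finset.range (k / 2 + 1),
        ((-1 : ℝ) ^ m / (Nat.factorial (2 * m) : ℝ)) •
          iteratedDeriv (2 * m) (fun t : ℝ => polyEval P (A + t • B)) 0 := by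
  obtain ⟨c, hc⟩ := poly_expand k P hP A B
  have hs : star (A + Complex.I • B) = A + (-Complex.I) • B := by
    rw [star_add, star_smul, hA.star_eq, hB.star_eq]; simp
  have hd : ∀ m ∈ Finset.range (k / 2 + 1),
      iteratedDeriv (2 * m) (fun t : ℝ => polyEval P (A + t • B)) 0
        = ((2 * m).factorial : ℝ) • c (2 * m) := by
    intro m hm
    have hf : (fun t : ℝ => polyEval P (A + t • B)) =
        fun t : ℝ => ∑ j ∈ Finset.range (2 * (k / 2 + 1)), t ^ j • c j := by
      funext t
      have := hc (t : ℂ)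
      rw [Complex.coe_smul] at this
      rw [this]
      refine Finset.sum_congr rfl fun j _ => ?_
      rw [← Complex.ofReal_pow, Complex.coe_smul]
    rw [hf, iteratedDeriv_fun_sum (fun j _ => by fun_prop)]
    rw [Finset.sum_eq_single (2 * m)]
    · rw [iteratedDeriv_smul_const (by fun_prop), iteratedDeriv_fun_pow_zero]
      simp
    · intro j _ hj
      rw [iteratedDeriv_smul_const (by fun_prop), iteratedDeriv_fun_pow_zero]
      simp [hj.symm]
    · intro h
      simp only [Finset.mem_range] at h hm
      omega
  rw [opRe, star_polyEval, hs, hc, hc, ← Finset.sum_add_distrib, sum_even_odd, Finset.smul_sum]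
  refine Finset.sum_congr rfl fun m hm => ?_
  rw [hd m hm, smul_smul, div_mul_cancel₀ _ (by positivity)]
  have e1 : (-Complex.I) ^ (2 * m) = (((-1 : ℝ) ^ m : ℝ) : ℂ) := by
    rw [pow_mul]; simp
  have e2 : Complex.I ^ (2 * m) = (((-1 : ℝ) ^ m : ℝ) : ℂ) := by
    rw [pow_mul]; simp
  rw [pow_succ, pow_succ, e1, e2, ← add_smul, ← add_smul, ← Complex.coe_smul ((-1 : ℝ) ^ m)]
  rw [mul_neg, add_neg_cancel, zero_smul, add_zero, smul_smul]
  congr 1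
  ring
end

section
/- Let λ ∈ [−1, 1], let A, B be bounded self-adjoint operators on H with the spectrum of A contained in (−1, 1), set X := A + iB and C_λ := λ(I − λA)^{-1/2} B (I − λA)^{-1/2}. Then I − λX is invertible, (I − λX)^{-1} = (I − λA)^{-1/2} (I + C_λ²)^{-1} (I + iC_λ) (I − λA)^{-1/2}, and consequently Re{(I − λX)^{-1}} = (I − λA)^{-1/2} (I + C_λ²)^{-1} (I − λA)^{-1/2} and Im{(I − λX)^{-1}} = (I − λA)^{-1/2} (I + C_λ²)^{-1} C_λ (I − λA)^{-1/2}. -/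
open ContinuousLinearMap MeasureTheory

variable {H : Type*} [NormedAddCommGroup H] [InnerProductSpace ℂ H] [CompleteSpace H]

/-- The imaginary part `(Y - Y*)/(2i)` of a bounded operator. -/
noncomputable def opIm (Y : H →L[ℂ] H) : H →L[ℂ] H := (2 * Complex.I)⁻¹ • (Y - star Y)

/-- The inverse square root `T^{-1/2}` of a (positive invertible) operator, via the
continuous functional calculus. -/
noncomputable def invSqrt (T : H →L[ℂ] H) : H →L[ℂ] H := cfc (fun x : ℝ => (Real.sqrt x)⁻¹) T

theorem aux_alg {R : Type*} [Ring R] [Algebra ℂ R] (S Q T B C D X : R) (l : ℂ)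
    (h1 : S * Q = 1) (h2 : Q * S = 1) (h3 : Q * Q = T)
    (hC : C = l • (S * B * S)) (hX : 1 - l • X = T - Complex.I • (l • B))
    (hD1 : D * (1 + C ^ 2) = 1) (hD2 : (1 + C ^ 2) * D = 1) (hDC : D * C = C * D) :
    (1 - l • X) * (S * D * (1 + Complex.I • C) * S) = 1 ∧
    (S * D * (1 + Complex.I • C) * S) * (1 - l • X) = 1 := by
  have hI : (Complex.I • C) * (Complex.I • C) = - C ^ 2 := by
    rw [smul_mul_smul_comm, Complex.I_mul_I, neg_one_smul, pow_two]
  have e1 : (1 - Complex.I • C) * (1 + Complex.I • C) = 1 + C ^ 2 := by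
    have : (1 - Complex.I • C) * (1 + Complex.I • C) = 1 - (Complex.I • C) * (Complex.I • C) := by
      generalize Complex.I • C = Z
      noncomm_ring
    rw [this, hI, sub_neg_eq_add]
  have e2 : (1 + Complex.I • C) * (1 - Complex.I • C) = 1 + C ^ 2 := by
    have : (1 + Complex.I • C) * (1 - Complex.I • C) = 1 - (Complex.I • C) * (Complex.I • C) := by
      generalize Complex.I • C = Z
      noncomm_ring
    rw [this, hI, sub_neg_eq_add]
  have hDC' : D * (1 + Complex.I • C) = (1 + Complex.I • C) * D := by
    rw [mul_add, add_mul, mul_smul_comm, smul_mul_assoc, hDC, mul_one, one_mul]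
  have hQC : Q * C * Q = l • B := by
    rw [hC, mul_smul_comm, smul_mul_assoc]
    congr 1
    calc Q * (S * B * S) * Q = (Q * S) * B * (S * Q) := by noncomm_ring
      _ = B := by rw [h1, h2, one_mul, mul_one]
  have hf : 1 - l • X = Q * (1 - Complex.I • C) * Q := by
    rw [hX, mul_sub, sub_mul, mul_one, h3, mul_smul_comm, smul_mul_assoc, hQC]
  rw [hf]
  generalize (1 - Complex.I • C) = M at *
  generalize (1 + Complex.I • C) = N at *
  constructor
  · calc Q * M * Q * (S * D * N * S) = Q * M * (Q * S) * (D * N) * S := by noncomm_ring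
      _ = Q * ((M * N) * D) * S := by rw [h2, hDC']; noncomm_ring
      _ = 1 := by rw [e1, hD2, mul_one, h2]
  · calc S * D * N * S * (Q * M * Q) = S * D * N * (S * Q) * M * Q := by noncomm_ring
      _ = S * (D * (N * M)) * Q := by rw [h1]; noncomm_ring
      _ = 1 := by rw [e2, hD1, mul_one, h1]

/-- For `λ ∈ [−1,1]`, self-adjoint `A, B` with `σ(A) ⊆ (−1,1)`, `X = A + iB` and
`C_λ = λ(I−λA)^{-1/2} B (I−λA)^{-1/2}`: the operator `I − λX` is invertible,
`(I−λX)⁻¹ = (I−λA)^{-1/2}(I+C_λ²)⁻¹(I+iC_λ)(I−λA)^{-1/2}`, and consequently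
`Re (I−λX)⁻¹ = (I−λA)^{-1/2}(I+C_λ²)⁻¹(I−λA)^{-1/2}` and
`Im (I−λX)⁻¹ = (I−λA)^{-1/2}(I+C_λ²)⁻¹ C_λ (I−λA)^{-1/2}`. -/
theorem stmt4 [TopologicalSpace.SeparableSpace H] (hinf : ¬ FiniteDimensional ℂ H)
    (l : ℝ) (hl : l ∈ Set.Icc (-1 : ℝ) 1)
    (A B X S C : H →L[ℂ] H) (hA : IsSelfAdjoint A) (hB : IsSelfAdjoint B)
    (hspA : spectrum ℂ A ⊆ (fun x : ℝ => (x : ℂ)) '' Set.Ioo (-1 : ℝ) 1)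
    (hX : X = A + Complex.I • B)
    (hS : S = invSqrt (1 - (l : ℂ) • A)) (hC : C = l • (S * B * S)) :
    IsUnit (1 - (l : ℂ) • X) ∧
    Ring.inverse (1 - (l : ℂ) • X) =
      S * Ring.inverse (1 + C ^ 2) * (1 + Complex.I • C) * S ∧
    opRe (Ring.inverse (1 - (l : ℂ) • X)) = S * Ring.inverse (1 + C ^ 2) * S ∧
    opIm (Ring.inverse (1 - (l : ℂ) • X)) = S * Ring.inverse (1 + C ^ 2) * C * S := by
  have hT : IsSelfAdjoint (1 - (l : ℂ) • A) := by
    apply IsSelfAdjoint.sub (IsSelfAdjoint.one _)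
    apply IsSelfAdjoint.smul _ hA
    simp [isSelfAdjoint_iff]
  have hspR : ∀ x ∈ spectrum ℝ A, x ∈ Set.Ioo (-1 : ℝ) 1 := by
    intro x hx
    have hx' : (x : ℂ) ∈ spectrum ℂ A := by
      have := spectrum.algebraMap_mem ℂ hx
      simpa using this
    obtain ⟨y, hy, hxy⟩ := hspA hx'
    have : y = x := by simpa using hxy
    exact this ▸ hy
  have hTc : 1 - (l : ℂ) • A = cfc (fun x : ℝ => 1 - l * x) A := by
    rw [cfc_sub (fun _ : ℝ => (1 : ℝ)) (fun x : ℝ => l * x) A, cfc_const_mul l (fun x : ℝ => x) A,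
      cfc_const_one ℝ A, cfc_id' ℝ A]
    simp
  have hspT : ∀ x ∈ spectrum ℝ (1 - (l : ℂ) • A), 0 < x := by
    intro x hx
    rw [hTc, cfc_map_spectrum (fun x : ℝ => 1 - l * x) A] at hx
    obtain ⟨y, hy, rfl⟩ := hx
    have := hspR y hy
    have h1 : |l * y| < 1 := by
      rw [abs_mul]
      have h2 : |l| ≤ 1 := abs_le.2 hl
      have h3 : |y| < 1 := abs_lt.2 this
      nlinarith [abs_nonneg l, abs_nonneg y]
    have := (abs_lt.1 h1).2
    simp only
    linarith
  have hc : ContinuousOn (fun x : ℝ => (Real.sqrt x)⁻¹) (spectrum ℝ (1 - (l : ℂ) • A)) := by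
    apply ContinuousOn.inv₀ Real.continuous_sqrt.continuousOn
    intro x hx
    exact (Real.sqrt_pos.2 (hspT x hx)).ne'
  have hc2 : ContinuousOn Real.sqrt (spectrum ℝ (1 - (l : ℂ) • A)) :=
    Real.continuous_sqrt.continuousOn
  have hSs : IsSelfAdjoint S := by rw [hS]; exact cfc_predicate _ _
  have h1 : S * cfc Real.sqrt (1 - (l : ℂ) • A) = 1 := by
    rw [hS, invSqrt, ← cfc_mul _ _ _ hc hc2]
    refine Eq.trans ?_ (cfc_const_one ℝ (1 - (l : ℂ) • A))
    exact cfc_congr fun x hx => inv_mul_cancel₀ (Real.sqrt_pos.2 (hspT x hx)).ne'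
  have h2 : cfc Real.sqrt (1 - (l : ℂ) • A) * S = 1 := by
    rw [hS, invSqrt, ← cfc_mul _ _ _ hc2 hc]
    refine Eq.trans ?_ (cfc_const_one ℝ (1 - (l : ℂ) • A))
    exact cfc_congr fun x hx => mul_inv_cancel₀ (Real.sqrt_pos.2 (hspT x hx)).ne'
  have h3 : cfc Real.sqrt (1 - (l : ℂ) • A) * cfc Real.sqrt (1 - (l : ℂ) • A)
      = 1 - (l : ℂ) • A := by
    rw [← cfc_mul _ _ _ hc2 hc2]
    conv_rhs => rw [← cfc_id' ℝ (1 - (l : ℂ) • A)]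
    exact cfc_congr fun x hx => Real.mul_self_sqrt (hspT x hx).le
  have hSBS : IsSelfAdjoint (S * B * S) := by
    have := hB.conjugate S
    rwa [hSs.star_eq] at this
  have hCs : IsSelfAdjoint C := by
    rw [hC]
    exact IsSelfAdjoint.smul (IsSelfAdjoint.all l) hSBS
  have hU : IsUnit (1 + C ^ 2) := by
    have : 1 + C ^ 2 = cfc (fun x : ℝ => 1 + x ^ 2) C := by
      rw [cfc_add C (fun _ : ℝ => (1 : ℝ)) (fun x : ℝ => x ^ 2), cfc_const_one ℝ C,
        cfc_pow_id C 2]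
    rw [this, isUnit_cfc_iff (fun x : ℝ => 1 + x ^ 2) C]
    intro x _
    positivity
  have hD1 := Ring.inverse_mul_cancel _ hU
  have hD2 := Ring.mul_inverse_cancel _ hU
  have hDs : star (Ring.inverse (1 + C ^ 2)) = Ring.inverse (1 + C ^ 2) := by
    rw [← Ring.inverse_star]
    simp [hCs.star_eq]
  generalize Ring.inverse (1 + C ^ 2) = D at *
  have hDC : D * C = C * D := by
    calc D * C = D * C * ((1 + C ^ 2) * D) := by rw [hD2, mul_one]
      _ = D * (1 + C ^ 2) * C * D := by noncomm_ring
      _ = C * D := by rw [hD1, one_mul]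
  have hXe : 1 - (l : ℂ) • X = (1 - (l : ℂ) • A) - Complex.I • ((l : ℂ) • B) := by
    rw [hX, smul_add, smul_comm (l : ℂ) Complex.I B, sub_add_eq_sub_sub]
  have hC' : C = (l : ℂ) • (S * B * S) := by rw [hC]; simp
  obtain ⟨k1, k2⟩ := aux_alg S _ _ B C D X l h1 h2 h3 hC' hXe hD1 hD2 hDC
  have hinv : Ring.inverse (1 - (l : ℂ) • X) = S * D * (1 + Complex.I • C) * S :=
    Ring.inverse_unit ⟨_, _, k1, k2⟩
  have hexp : S * D * (1 + Complex.I • C) * S = S * D * S + Complex.I • (S * D * C * S) := by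
    rw [mul_add, add_mul, mul_one, mul_smul_comm, smul_mul_assoc]
  have hst1 : star (S * D * S) = S * D * S := by
    simp only [star_mul, hSs.star_eq, hDs, mul_assoc]
  have hst2 : star (S * D * C * S) = S * D * C * S := by
    simp only [star_mul, hSs.star_eq, hDs, hCs.star_eq]
    rw [mul_assoc S D C, hDC]
    simp only [mul_assoc]
  have hst : star (S * D * S + Complex.I • (S * D * C * S))
      = S * D * S - Complex.I • (S * D * C * S) := by
    rw [star_add, star_smul, hst1, hst2]
    simp [sub_eq_add_neg]
  refine ⟨⟨⟨_, _, k1, k2⟩, rfl⟩, hinv, ?_, ?_⟩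
  · rw [hinv, hexp, opRe, hst]
    module
  · rw [hinv, hexp, opIm, hst, add_sub_sub_cancel, ← two_smul ℂ, smul_smul, smul_smul,
      mul_assoc, inv_mul_cancel₀ (by simp), one_smul]
end

section
/- Let k ∈ ℕ, λ ∈ [−1, 1], let A, B be bounded self-adjoint operators on H with the spectrum of A contained in (−1, 1), and set X := A + iB. Then I − λX is invertible, I − λ(A + tB) is invertible for real t near 0, and, writing D^{2m}g(A;B) for the (2m)-th derivative at t = 0 of the map t ↦ (A + tB)^{2k} (I − λ(A + tB))^{-1}, the following inequalities hold: if k is odd, Re{X^{2k}(I − λX)^{-1}} ≤ Σ_{m=0}^{k−1} ((−1)^m / (2m)!) · D^{2m}g(A;B); if k is even, Re{X^{2k}(I − λX)^{-1}} ≥ Σ_{m=0}^{k−1} ((−1)^m / (2m)!) · D^{2m}g(A;B). -/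
open ContinuousLinearMap MeasureTheory

variable {H : Type*} [NormedAddCommGroup H] [InnerProductSpace ℂ H] [CompleteSpace H]

open Filter Topology in
lemma aux_deriv {F : Type*} [NormedAddCommGroup F] [NormedSpace ℝ F] (N : ℕ) (c : ℕ → F)
    (h f : ℝ → F) (hh : ContDiffAt ℝ ⊤ h 0)
    (hf : f =ᶠ[𝓝 0] fun t => ∑ n ∈ Finset.range N, t ^ n • c n + t ^ N • h t)
    (m : ℕ) (hm : m < N) : iteratedDeriv m f 0 = (m.factorial : ℝ) • c m := by
  have hh' : ContDiffAt ℝ m h 0 := hh.of_le le_top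
  have hpow : ∀ n : ℕ, ContDiffAt ℝ m (fun t : ℝ => t ^ n) 0 := fun n => by fun_prop
  rw [hf.iteratedDeriv_eq]
  have e1 : iteratedDeriv m (fun t : ℝ => t ^ N • h t) 0 = 0 := by
    rw [← iteratedDerivWithin_univ]
    have := iteratedDerivWithin_smul (n := m) (x := (0:ℝ)) (s := Set.univ) (Set.mem_univ _)
      uniqueDiffOn_univ (hpow N).contDiffWithinAt hh'.contDiffWithinAt
    refine this.trans (Finset.sum_eq_zero fun i hi => ?_)
    rw [iteratedDerivWithin_univ, iteratedDeriv_fun_pow_zero, if_neg, Nat.cast_zero, zero_smul, smul_zero]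
    have := Finset.mem_range.1 hi
    omega
  have e2 : iteratedDeriv m (fun t : ℝ => ∑ n ∈ Finset.range N, t ^ n • c n) 0
      = (m.factorial : ℝ) • c m := by
    rw [iteratedDeriv_fun_sum (f := fun n (t : ℝ) => t ^ n • c n) (fun i _ => (hpow i).smul contDiffAt_const)]
    rw [Finset.sum_eq_single m]
    · rw [iteratedDeriv_smul_const (hpow m), iteratedDeriv_fun_pow_zero, if_pos rfl]
    · intro b _ hb
      rw [iteratedDeriv_smul_const (hpow b), iteratedDeriv_fun_pow_zero, if_neg hb.symm, Nat.cast_zero, zero_smul]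
    · intro h; exact absurd (Finset.mem_range.2 hm) h
  have := iteratedDeriv_add (n := m) (x := (0:ℝ))
    (f := fun t : ℝ => ∑ n ∈ Finset.range N, t ^ n • c n) (g := fun t : ℝ => t ^ N • h t)
    (ContDiffAt.sum fun i _ => (hpow i).smul contDiffAt_const) ((hpow N).smul hh')
  rw [e1, e2, add_zero] at this
  exact this

lemma aux_poly {R : Type*} [Ring R] [Algebra ℂ R] (A B M Q : R) (l : ℂ) (hM : M = 1 - l • A)
    (h2 : Q * M = 1) (N : ℕ) :
    ∃ c : ℕ → R, ∀ z : ℂ, IsUnit (1 - l • (A + z • B)) →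
      (A + z • B) ^ N * Ring.inverse (1 - l • (A + z • B)) =
        ∑ n ∈ Finset.range N, z ^ n • c n
          + z ^ N • ((Q * B) ^ N * Ring.inverse (1 - l • (A + z • B))) := by
  induction N with
  | zero => exact ⟨fun _ => 0, fun z _ => by simp⟩
  | succ N ih =>
    obtain ⟨c, hc⟩ := ih
    refine ⟨fun n => (if n < N then c n * A else (Q * B) ^ N * (Q * A)) +
      (if n = 0 then 0 else c (n - 1) * B), fun z hz => ?_⟩
    have hc := hc z hz
    set Y := A + z • B with hY
    set J := Ring.inverse (1 - l • Y) with hJ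
    have hJ1 : (1 - l • Y) * J = 1 := Ring.mul_inverse_cancel _ hz
    have hJ2 : J * (1 - l • Y) = 1 := Ring.inverse_mul_cancel _ hz
    have hcomm : Commute Y (1 - l • Y) :=
      (Commute.one_right Y).sub_right ((Commute.refl Y).smul_right l)
    have hYJ : Y * J = J * Y := by
      calc Y * J = (J * (1 - l • Y)) * Y * J := by rw [hJ2, one_mul]
        _ = J * (Y * (1 - l • Y)) * J := by rw [hcomm.eq]; noncomm_ring
        _ = J * Y * ((1 - l • Y) * J) := by noncomm_ring
        _ = J * Y := by rw [hJ1, mul_one]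
    have key : J * Y = Q * A + z • (Q * B * J) := by
      have hMA : M * A = A * M := by
        rw [hM]; exact ((Commute.one_left A).sub_left ((Commute.refl A).smul_left l)).eq
      have : Q * A * (1 - l • Y) = Y - z • (Q * B) := by
        have e : (1 - l • Y) = M - l • z • B := by rw [hM, hY, smul_add]; abel
        have e3 : Q * A * M = A := by rw [mul_assoc, ← hMA, ← mul_assoc, h2, one_mul]
        have e4 : l • (Q * A) = Q - 1 := by
          have : l • A = 1 - M := by rw [hM]; abel
          rw [← mul_smul_comm, this, mul_sub, h2, mul_one]
        rw [e, mul_sub, e3, mul_smul_comm, mul_smul_comm, smul_comm l z, ← smul_mul_assoc l, e4,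
          sub_mul, one_mul, smul_sub, hY]
        abel
      rw [← hYJ]
      calc Y * J = (Y - z • (Q * B)) * J + z • (Q * B * J) := by
            rw [sub_mul, smul_mul_assoc]; abel
        _ = _ := by rw [← this, mul_assoc, hJ1, mul_one]
    rw [pow_succ, mul_assoc, hYJ, ← mul_assoc, hc, add_mul, smul_mul_assoc, mul_assoc, key]
    simp only [smul_add, Finset.sum_add_distrib]
    rw [Finset.sum_range_succ, Finset.sum_range_succ' (fun n => z ^ n • if n = 0 then (0:R) else _)]
    simp only [Finset.sum_mul, hY, mul_add, lt_irrefl, if_false, Nat.add_eq_zero_iff, one_ne_zero,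
      and_false, Nat.add_sub_cancel, if_true, smul_zero, add_zero, Finset.sum_add_distrib]
    rw [Finset.sum_congr rfl (fun n hn => by rw [if_pos (Finset.mem_range.1 hn)] :
      ∀ n ∈ Finset.range N, z ^ n • (if n < N then c n * A else (Q * B) ^ N * (Q * A)) =
        z ^ n • (c n * A))]
    simp only [smul_mul_assoc, mul_smul_comm, smul_smul, pow_succ, mul_assoc, smul_add]
    simp only [mul_comm z]
    abel

lemma aux_unit {A : H →L[ℂ] H} (hA : IsSelfAdjoint A) {l : ℝ} (hl : l ∈ Set.Icc (-1 : ℝ) 1)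
    (hspA : spectrum ℂ A ⊆ (fun x : ℝ => (x : ℂ)) '' Set.Ioo (-1 : ℝ) 1) :
    ∃ p : H →L[ℂ] H, IsSelfAdjoint p ∧ IsUnit p ∧ p * p = 1 - (l : ℂ) • A := by
  have hM : IsSelfAdjoint (1 - (l : ℂ) • A) :=
    (IsSelfAdjoint.one _).sub (IsSelfAdjoint.smul (by simp [IsSelfAdjoint]) hA)
  have hu : ∀ s : ℝ, 1 ≤ s → IsUnit (algebraMap ℂ (H →L[ℂ] H) s - (l : ℂ) • A) := by
    intro s hs
    by_cases h0 : l = 0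
    · subst h0
      simp only [Complex.ofReal_zero, zero_smul, sub_zero]
      exact (IsUnit.mk0 (s : ℂ) (by norm_cast; linarith)).map (algebraMap ℂ (H →L[ℂ] H))
    · have hlc : (l : ℂ) ≠ 0 := by exact_mod_cast h0
      have : ((s / l : ℝ) : ℂ) ∉ spectrum ℂ A := by
        intro h
        obtain ⟨x, hx, hxe⟩ := hspA h
        have hxe : x = s / l := Complex.ofReal_injective hxe
        have : x * l = s := by rw [hxe]; field_simp
        have h1 : |x| < 1 := abs_lt.2 hx
        have h2 : |l| ≤ 1 := abs_le.2 hl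
        have h3 : |x * l| < 1 := by
          rw [abs_mul]; nlinarith [abs_nonneg x, abs_nonneg l]
        rw [this] at h3
        linarith [le_abs_self s]
      rw [spectrum.notMem_iff] at this
      have h4 : algebraMap ℂ (H →L[ℂ] H) s - (l : ℂ) • A =
          algebraMap ℂ (H →L[ℂ] H) l * (algebraMap ℂ (H →L[ℂ] H) ((s / l : ℝ) : ℂ) - A) := by
        rw [mul_sub, ← map_mul, Algebra.smul_def]
        congr 2
        push_cast
        field_simp
      rw [h4]
      exact ((IsUnit.mk0 _ hlc).map (algebraMap ℂ (H →L[ℂ] H))).mul this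
  have hsp : SpectrumRestricts (1 - (l : ℂ) • A) ContinuousMap.realToNNReal := by
    rw [SpectrumRestricts.nnreal_iff]
    intro x hx
    by_contra hneg
    push Not at hneg
    have h5 := hu (1 - x) (by linarith)
    refine hx ?_
    rw [spectrum.mem_resolventSet_iff, ← IsUnit.neg_iff]
    convert! h5 using 1
    rw [IsScalarTower.algebraMap_apply ℝ ℂ (H →L[ℂ] H)]
    simp
    abel
  obtain ⟨p, hp1, -, hp3⟩ := CFC.exists_sqrt_of_isSelfAdjoint_of_quasispectrumRestricts hM hsp
  have hpp : p * p = 1 - (l : ℂ) • A := hp3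
  refine ⟨p, hp1, ?_, hpp⟩
  have h6 := hu 1 le_rfl
  rw [Complex.ofReal_one, map_one, ← hpp] at h6
  exact (Commute.refl p).isUnit_mul_iff.1 h6 |>.1

lemma aux_unit2 {p C : H →L[ℂ] H} (hp : IsSelfAdjoint p) (hu : IsUnit p) (hC : IsSelfAdjoint C) :
    IsUnit (p * p - Complex.I • C) := by
  obtain ⟨u, rfl⟩ := hu
  set q : H →L[ℂ] H := ↑u⁻¹ with hq
  have hqs : IsSelfAdjoint q := by
    have := congrArg star (Units.mul_inv u)
    rw [star_mul, hp.star_eq, star_one] at this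
    exact Units.eq_inv_of_mul_eq_one_right this
  have hD : IsSelfAdjoint (q * C * q) := by
    have := hC.conjugate q
    rwa [hqs.star_eq] at this
  have h1 : -Complex.I ∉ spectrum ℂ (q * C * q) := by
    intro h
    have := hD.mem_spectrum_eq_re h
    have := congrArg Complex.im this
    simp at this
  rw [spectrum.notMem_iff] at h1
  have h2 : (u : H →L[ℂ] H) * u - Complex.I • C =
      Complex.I • ((u : H →L[ℂ] H) * (algebraMap ℂ (H →L[ℂ] H) (-Complex.I) - q * C * q) * u) := by
    have e : (u : H →L[ℂ] H) * (q * C * q) * u = C := by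
      calc _ = (u * q) * C * (q * u) := by noncomm_ring
        _ = C := by rw [hq, Units.mul_inv, Units.inv_mul, one_mul, mul_one]
    rw [mul_sub, sub_mul, e, smul_sub, Algebra.algebraMap_eq_smul_one, mul_smul_comm,
      smul_mul_assoc, mul_one, smul_smul]
    simp
  rw [h2, ← smul_one_mul, ← Algebra.algebraMap_eq_smul_one]
  exact ((IsUnit.mk0 _ Complex.I_ne_zero).map (algebraMap ℂ (H →L[ℂ] H))).mul
    ((u.isUnit.mul h1).mul u.isUnit)

/-- parity sum -/
lemma aux_parity {R : Type*} [AddCommGroup R] [Module ℂ R] (c : ℕ → R) (k : ℕ) :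
    (2 : ℂ)⁻¹ • (∑ n ∈ Finset.range (2 * k), Complex.I ^ n • c n
      + ∑ n ∈ Finset.range (2 * k), (-Complex.I) ^ n • c n) =
    ∑ m ∈ Finset.range k, ((-1 : ℂ) ^ m) • c (2 * m) := by
  induction k with
  | zero => simp
  | succ k ih =>
    rw [Finset.sum_range_succ _ k, ← ih, show 2 * (k + 1) = 2 * k + 1 + 1 by ring]
    simp only [Finset.sum_range_succ, pow_succ, pow_mul, pow_zero, one_mul, neg_mul_neg, Complex.I_mul_I]
    module

/-- Lemma 3.3 of the paper: for `k ≥ 1`, `λ ∈ [−1,1]`, self-adjoint `A, B` with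
`σ(A) ⊆ (−1,1)` and `X = A + iB`, the operators `I − λX` and `I − λ(A+tB)` (for `t` near `0`)
are invertible and, with `D^{2m}g(A;B)` the `(2m)`-th derivative at `t = 0` of
`t ↦ (A+tB)^{2k} (I − λ(A+tB))⁻¹`, one has
`Re{X^{2k}(I−λX)⁻¹} ≤ Σ_{m=0}^{k−1} ((−1)^m/(2m)!) D^{2m}g(A;B)` if `k` is odd and the
reverse inequality if `k` is even. -/
theorem stmt6 [TopologicalSpace.SeparableSpace H] (hinf : ¬ FiniteDimensional ℂ H)
    (k : ℕ) (hk : 1 ≤ k) (l : ℝ) (hl : l ∈ Set.Icc (-1 : ℝ) 1)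
    (A B X : H →L[ℂ] H) (hA : IsSelfAdjoint A) (hB : IsSelfAdjoint B)
    (hspA : spectrum ℂ A ⊆ (fun x : ℝ => (x : ℂ)) '' Set.Ioo (-1 : ℝ) 1)
    (hX : X = A + Complex.I • B) :
    IsUnit (1 - (l : ℂ) • X) ∧
    (∃ δ > (0 : ℝ), ∀ t : ℝ, |t| < δ → IsUnit (1 - (l : ℂ) • (A + t • B))) ∧
    (Odd k →
      ((∑ m ∈ Finset.range k,
          ((-1 : ℝ) ^ m / (Nat.factorial (2 * m) : ℝ)) •
            iteratedDeriv (2 * m)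
              (fun t : ℝ => (A + t • B) ^ (2 * k) * Ring.inverse (1 - (l : ℂ) • (A + t • B))) 0)
        - opRe (X ^ (2 * k) * Ring.inverse (1 - (l : ℂ) • X))).IsPositive) ∧
    (Even k →
      (opRe (X ^ (2 * k) * Ring.inverse (1 - (l : ℂ) • X))
        - ∑ m ∈ Finset.range k,
            ((-1 : ℝ) ^ m / (Nat.factorial (2 * m) : ℝ)) •
              iteratedDeriv (2 * m)
                (fun t : ℝ => (A + t • B) ^ (2 * k) * Ring.inverse (1 - (l : ℂ) • (A + t • B)))
                0).IsPositive) := by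
  obtain ⟨p, hp, hpu, hpp⟩ := aux_unit hA hl hspA
  have hMu : IsUnit (1 - (l : ℂ) • A) := hpp ▸ hpu.mul hpu
  have hMs : IsSelfAdjoint (1 - (l : ℂ) • A) := by
    rw [← hpp]
    have := IsSelfAdjoint.mul_star_self p
    rwa [hp.star_eq] at this
  have hMpos : (1 - (l : ℂ) • A).IsPositive := by
    have := ContinuousLinearMap.isPositive_self_comp_adjoint p
    rw [← ContinuousLinearMap.star_eq_adjoint, hp.star_eq] at this
    rw [← hpp]
    exact this
  have hlB : IsSelfAdjoint ((l : ℂ) • B) := IsSelfAdjoint.smul (by simp [IsSelfAdjoint]) hB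
  have hL1 : 1 - (l : ℂ) • (A + Complex.I • B) = (1 - (l : ℂ) • A) - Complex.I • ((l : ℂ) • B) := by
    module
  have hL2 : 1 - (l : ℂ) • (A + (-Complex.I) • B) =
      (1 - (l : ℂ) • A) - Complex.I • (-((l : ℂ) • B)) := by
    module
  have hU1 : IsUnit (1 - (l : ℂ) • (A + Complex.I • B)) := by
    rw [hL1, ← hpp]; exact aux_unit2 hp hpu hlB
  have hU2 : IsUnit (1 - (l : ℂ) • (A + (-Complex.I) • B)) := by
    rw [hL2, ← hpp]; exact aux_unit2 hp hpu hlB.neg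
  have hcont : Continuous (fun t : ℝ => 1 - (l : ℂ) • (A + t • B)) := by fun_prop
  have hev : ∀ᶠ t : ℝ in nhds 0, IsUnit (1 - (l : ℂ) • (A + t • B)) := by
    refine hcont.continuousAt.eventually_mem (Units.isOpen.mem_nhds ?_)
    simpa using hMu
  set Q := Ring.inverse (1 - (l : ℂ) • A) with hQ
  have hQM : Q * (1 - (l : ℂ) • A) = 1 := Ring.inverse_mul_cancel _ hMu
  have hMQ : (1 - (l : ℂ) • A) * Q = 1 := Ring.mul_inverse_cancel _ hMu
  have hQs : star Q = Q := by rw [hQ, ← Ring.inverse_star, hMs.star_eq]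
  obtain ⟨c, hc⟩ := aux_poly A B _ Q (l : ℂ) rfl hQM (2 * k)
  have hder : ∀ m < k, iteratedDeriv (2 * m)
      (fun t : ℝ => (A + t • B) ^ (2 * k) * Ring.inverse (1 - (l : ℂ) • (A + t • B))) 0
      = ((2 * m).factorial : ℝ) • c (2 * m) := by
    intro m hm
    refine aux_deriv (2 * k) c (fun t : ℝ => (Q * B) ^ (2 * k) *
      Ring.inverse (1 - (l : ℂ) • (A + t • B))) _ ?_ ?_ (2 * m) (by omega)
    · refine contDiffAt_const.mul ?_
      have h0 : (1 - (l : ℂ) • (A + (0 : ℝ) • B)) = (hMu.unit : H →L[ℂ] H) := by simp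
      have h1 : ContDiffAt ℝ ⊤ (fun t : ℝ => 1 - (l : ℂ) • (A + t • B)) 0 := by fun_prop
      have h2 := contDiffAt_ringInverse (n := ⊤) ℝ hMu.unit
      rw [← h0] at h2
      exact h2.comp (0 : ℝ) h1
    · filter_upwards [hev] with t ht
      have := hc (t : ℂ)
      simp only [Complex.coe_smul, ← Complex.ofReal_pow] at this
      exact this ht
  have hsum : (∑ m ∈ Finset.range k,
          ((-1 : ℝ) ^ m / (Nat.factorial (2 * m) : ℝ)) •
            iteratedDeriv (2 * m)
              (fun t : ℝ => (A + t • B) ^ (2 * k) * Ring.inverse (1 - (l : ℂ) • (A + t • B))) 0)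
      = ∑ m ∈ Finset.range k, ((-1 : ℂ) ^ m) • c (2 * m) := by
    refine Finset.sum_congr rfl fun m hm => ?_
    rw [hder m (Finset.mem_range.1 hm), smul_smul, div_mul_cancel₀ _ (by positivity),
      ← Complex.coe_smul]
    push_cast
    rfl
  have hsL : star (1 - (l : ℂ) • (A + Complex.I • B)) = 1 - (l : ℂ) • (A + (-Complex.I) • B) := by
    simp [hA.star_eq, hB.star_eq]
  have hsX : star (A + Complex.I • B) = A + (-Complex.I) • B := by
    simp [hA.star_eq, hB.star_eq]
  have c1 := hc _ hU1
  have c2 := hc _ hU2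
  have hcm : ∀ z : ℂ, IsUnit (1 - (l : ℂ) • (A + z • B)) →
      Commute (A + z • B) (Ring.inverse (1 - (l : ℂ) • (A + z • B))) := by
    intro z hz
    have h1 : Commute (A + z • B) (1 - (l : ℂ) • (A + z • B)) :=
      (Commute.one_right (A + z • B)).sub_right ((Commute.refl (A + z • B)).smul_right (l : ℂ))
    obtain ⟨u, hu⟩ := hz
    rw [← hu] at h1 ⊢
    rw [Ring.inverse_unit]
    exact h1.units_inv_right
  set J := Ring.inverse (1 - (l : ℂ) • (A + Complex.I • B)) with hJ
  set J' := Ring.inverse (1 - (l : ℂ) • (A + (-Complex.I) • B)) with hJ'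
  have hsJ : star J = J' := by rw [hJ, ← Ring.inverse_star, hsL]
  have hJ1 : J * (1 - (l : ℂ) • (A + Complex.I • B)) = 1 := Ring.inverse_mul_cancel _ hU1
  have hJ1' : (1 - (l : ℂ) • (A + Complex.I • B)) * J = 1 := Ring.mul_inverse_cancel _ hU1
  have hJ2 : J' * (1 - (l : ℂ) • (A + (-Complex.I) • B)) = 1 := Ring.inverse_mul_cancel _ hU2
  have hJ2' : (1 - (l : ℂ) • (A + (-Complex.I) • B)) * J' = 1 := Ring.mul_inverse_cancel _ hU2
  set T : H →L[ℂ] H := ((Q * B) ^ k * J) * (1 - (l : ℂ) • A) * star ((Q * B) ^ k * J) with hT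
  have hTpos : T.IsPositive := hMpos.conj_adjoint ((Q * B) ^ k * J)
  have hJJ : J + J' = (2 : ℂ) • (J * (1 - (l : ℂ) • A) * J') := by
    have e : (2 : ℂ) • (1 - (l : ℂ) • A) = (1 - (l : ℂ) • (A + (-Complex.I) • B)) +
      (1 - (l : ℂ) • (A + Complex.I • B)) := by module
    rw [← smul_mul_assoc, ← mul_smul_comm, e, mul_add, add_mul, mul_assoc, hJ2', hJ1, mul_one,
      one_mul]
  have hsw : ∀ z : ℂ, ∀ K : H →L[ℂ] H, K * (1 - (l : ℂ) • (A + z • B)) = 1 →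
      (1 - (l : ℂ) • (A + z • B)) * K = 1 → SemiconjBy K (B * Q) (Q * B) := by
    intro z K h1 h2
    have e : (1 - (l : ℂ) • (A + z • B)) = (1 - (l : ℂ) • A) - ((l : ℂ) * z) • B := by module
    have h3 : (1 - (l : ℂ) • (A + z • B)) * (Q * B) = (B * Q) * (1 - (l : ℂ) • (A + z • B)) := by
      rw [e, sub_mul, mul_sub, ← mul_assoc, hMQ, mul_assoc B Q (1 - _), hQM, one_mul, mul_one,
        smul_mul_assoc, mul_smul_comm, mul_assoc]
    have : K * (B * Q) = (Q * B) * K := by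
      calc K * (B * Q) = K * ((B * Q) * (1 - (l : ℂ) • (A + z • B))) * K := by
            rw [mul_assoc, mul_assoc, h2, mul_one]
        _ = (K * (1 - (l : ℂ) • (A + z • B))) * (Q * B) * K := by rw [← h3, ← mul_assoc K]
        _ = _ := by rw [h1, one_mul]
    exact this
  have hTe : (Q * B) ^ (2 * k) * J + (Q * B) ^ (2 * k) * J' = (2 : ℂ) • T := by
    have s1 : SemiconjBy (J + J') ((B * Q) ^ k) ((Q * B) ^ k) :=
      ((hsw _ J hJ1 hJ1').add_left (hsw _ J' hJ2 hJ2')).pow_right k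
    have hst : star ((Q * B) ^ k * J) = J' * (B * Q) ^ k := by
      rw [star_mul, hsJ, star_pow, star_mul, hQs, hB.star_eq]
    rw [← mul_add, two_mul, pow_add, mul_assoc, ← s1.eq, hJJ, hT, hst]
    simp only [smul_mul_assoc, mul_smul_comm, mul_assoc]
  have hRe : opRe (X ^ (2 * k) * Ring.inverse (1 - (l : ℂ) • X)) =
      ∑ m ∈ Finset.range k, ((-1 : ℂ) ^ m) • c (2 * m) + ((-1 : ℂ) ^ k) • T := by
    rw [hX, opRe, ← hJ, star_mul, star_pow, hsJ, hsX, ← ((hcm (-Complex.I) hU2).pow_left (2 * k)).eq,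
      ← hJ', c1, c2, ← aux_parity]
    have i1 : (Complex.I) ^ (2 * k) = (-1 : ℂ) ^ k := by rw [pow_mul, Complex.I_sq]
    have i2 : (-Complex.I) ^ (2 * k) = (-1 : ℂ) ^ k := by rw [pow_mul, neg_sq, Complex.I_sq]
    rw [i1, i2, add_add_add_comm, ← smul_add, hTe]
    module
  refine ⟨by rw [hX]; exact hU1, ?_, fun ho => ?_, fun he => ?_⟩
  · obtain ⟨δ, hδ, h⟩ := Metric.eventually_nhds_iff.1 hev
    exact ⟨δ, hδ, fun t ht => h (by simpa using ht)⟩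
  · rw [hsum, hRe, ho.neg_one_pow]
    convert! hTpos using 1
    module
  · rw [hsum, hRe, he.neg_one_pow]
    convert! hTpos using 1
    module
end

section
/- Let k ∈ ℕ and set l := 4k − 2. Let P be a polynomial with real coefficients of degree < l and let μ be a finite positive Borel measure on [−1, 1]. Let A, B be bounded self-adjoint operators on H with the spectrum of A contained in (−1, 1), and set X := A + iB. Then for every λ ∈ [−1, 1] the operators I − λX and I − λ(A + tB) (for real t near 0) are invertible, the Bochner integrals defining f(Y) := P(Y) + ∫_{[−1,1]} Y^{l} (I − λY)^{-1} dμ(λ) exist for Y = X and Y = A + tB, and Re f(X) ≤ Σ_{m=0}^{2k−2} ((−1)^m / (2m)!) · D^{2m}f(A;B), where D^{m}f(A;B) denotes the m-th derivative at t = 0 of the map t ↦ f(A + tB). -/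
open ContinuousLinearMap MeasureTheory

variable {H : Type*} [NormedAddCommGroup H] [InnerProductSpace ℂ H] [CompleteSpace H]

/-- The operator function `Y ↦ P(Y) + ∫_{[−1,1]} Y^l (I − λY)⁻¹ dμ(λ)`, the integral
representation of an operator `l`-tone function on `(−1,1)`. -/
noncomputable def fcal (P : Polynomial ℝ) (μ : Measure ℝ) (l : ℕ) (Y : H →L[ℂ] H) :
    H →L[ℂ] H :=
  Polynomial.aeval Y (P.map Complex.ofRealHom) +
    ∫ s, Y ^ l * Ring.inverse (1 - (s : ℂ) • Y) ∂μ

theorem taylor_aux {E : Type*} [NormedAddCommGroup E] [NormedSpace ℝ E] (l : ℕ) (f R : ℝ → E)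
    (c : ℕ → E) (hR : ContDiffAt ℝ l R 0)
    (hf : f =ᶠ[nhds 0] fun t => (∑ j ∈ Finset.range l, t ^ j • c j) + t ^ l • R t)
    (n : ℕ) (hn : n < l) : iteratedDeriv n f 0 = (n.factorial : ℝ) • c n := by
  have hR' : ContDiffAt ℝ n R 0 := hR.of_le (by exact_mod_cast hn.le)
  rw [hf.iteratedDeriv_eq]
  rw [iteratedDeriv_fun_add (by fun_prop) (by fun_prop)]
  rw [iteratedDeriv_fun_sum (by intro i hi; fun_prop)]
  have h1 : ∀ j, iteratedDeriv n (fun t : ℝ => t ^ j • c j) 0 = 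
      if n = j then (j.factorial : ℝ) • c j else 0 := by
    intro j
    rw [iteratedDeriv_smul_const (by fun_prop), iteratedDeriv_fun_pow_zero]
    split_ifs <;> simp
  have h2 : iteratedDeriv n (fun t : ℝ => t ^ l • R t) 0 = 0 := by
    have := iteratedDerivWithin_smul (n := n) (f := fun t : ℝ => t ^ l) (g := R) (Set.mem_univ (0:ℝ))
      uniqueDiffOn_univ (by fun_prop) hR'.contDiffWithinAt
    simp only [iteratedDerivWithin_univ] at this
    rw [show (fun t : ℝ => t ^ l • R t) = (fun t : ℝ => t ^ l) • R from rfl, this]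
    apply Finset.sum_eq_zero
    intro i hi
    rw [iteratedDeriv_fun_pow_zero, if_neg]
    · simp
    · have := Finset.mem_range.mp hi
      omega
  simp only [h1, h2]
  simp [hn]

theorem expand_aux {𝓐 : Type*} [Ring 𝓐] [Algebra ℂ 𝓐] (a b lam g : 𝓐) (hl : ∀ x, lam * x = x * lam)
    (hg1 : (1 - lam * a) * g = 1) (hg2 : g * (1 - lam * a) = 1) (n : ℕ) :
    ∃ c : ℕ → 𝓐, ∀ (z : ℂ) (r : 𝓐), (1 - lam * (a + z • b)) * r = 1 → r * (1 - lam * (a + z • b)) = 1 →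
      (a + z • b) ^ n * r = (∑ j ∈ Finset.range n, z ^ j • c j) + z ^ n • ((g * b) ^ n * r) := by
  have key : ∀ (z : ℂ) (r : 𝓐), (1 - lam * (a + z • b)) * r = 1 → r * (1 - lam * (a + z • b)) = 1 →
      r * (a + z • b) = a * g + z • (g * b * r) := by
    intro z r h1 h2
    have hc : r * (a + z • b) = (a + z • b) * r := by
      have e : (a + z • b) * (1 - lam * (a + z • b)) = (1 - lam * (a + z • b)) * (a + z • b) := by
        rw [mul_sub, sub_mul, ← mul_assoc, ← hl]; simp
      calc r * (a + z • b) = r * (a + z • b) * ((1 - lam * (a + z • b)) * r) := by rw [h1, mul_one]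
        _ = r * ((a + z • b) * (1 - lam * (a + z • b))) * r := by noncomm_ring
        _ = (r * (1 - lam * (a + z • b))) * ((a + z • b) * r) := by rw [e]; noncomm_ring
        _ = _ := by rw [h2, one_mul]
    have e1 : z • (lam * (g * b * r)) = r - g := by
      have : g * ((1 - lam * (a + z • b)) * r) = g := by rw [h1, mul_one]
      have t2 : g * ((1 - lam * (a + z • b)) * r) = (g * (1 - lam * a)) * r - z • (g * lam * b * r) := by
        simp only [mul_add, mul_smul_comm, sub_mul, mul_sub, smul_mul_assoc, add_mul, mul_assoc]
        abel
      rw [t2, hg2, one_mul, ← hl] at this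
      rw [← mul_assoc, ← mul_assoc]
      nth_rewrite 2 [← this]
      abel
    have e2 : g = 1 + lam * a * g := by
      have := hg1
      rw [sub_mul, one_mul] at this
      rw [← this]; abel
    rw [hc]
    have e3 : z • (g * b * r) = z • (b * r) + a * (z • (lam * (g * b * r))) := by
      conv_lhs => rw [e2]
      rw [mul_smul_comm, ← mul_assoc a, ← hl a, ← smul_add]
      congr 1
      noncomm_ring
    rw [e3, e1]
    simp only [add_mul, smul_mul_assoc, mul_sub]
    abel
  induction n with
  | zero => exact ⟨fun _ => 0, by intros; simp⟩
  | succ n ih =>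
    obtain ⟨c, hc⟩ := ih
    refine ⟨fun j => (if j < n then c j * a else (g * b) ^ n * (a * g)) + 
      (if j = 0 then 0 else c (j - 1) * b), ?_⟩
    intro z r h1 h2
    have k := key z r h1 h2
    have hcomm : (a + z • b) ^ (n + 1) * r = (a + z • b) ^ n * r * (a + z • b) := by
      have e : (a + z • b) * (1 - lam * (a + z • b)) = (1 - lam * (a + z • b)) * (a + z • b) := by
        rw [mul_sub, sub_mul, ← mul_assoc, ← hl]; simp
      have : r * (a + z • b) = (a + z • b) * r := by
        calc r * (a + z • b) = r * (a + z • b) * ((1 - lam * (a + z • b)) * r) := by rw [h1, mul_one]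
        _ = r * ((a + z • b) * (1 - lam * (a + z • b))) * r := by noncomm_ring
        _ = (r * (1 - lam * (a + z • b))) * ((a + z • b) * r) := by rw [e]; noncomm_ring
        _ = _ := by rw [h2, one_mul]
      rw [pow_succ, mul_assoc, mul_assoc, this]
    rw [hcomm, hc z r h1 h2, add_mul, smul_mul_assoc, mul_assoc _ r, k]
    simp only [smul_add, Finset.sum_add_distrib]
    rw [Finset.sum_range_succ, Finset.sum_range_succ' (fun x => z ^ x • (if x = 0 then 0 else c (x - 1) * b))]
    have : ∑ x ∈ Finset.range n, z ^ x • (if x < n then c x * a else (g * b) ^ n * (a * g)) = 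
       ∑ x ∈ Finset.range n, z ^ x • (c x * a) := by
      apply Finset.sum_congr rfl
      intro x hx
      rw [if_pos (Finset.mem_range.mp hx)]
    rw [this, Finset.sum_mul]
    simp only [mul_add, smul_mul_assoc, mul_smul_comm, smul_add, Finset.sum_add_distrib, smul_smul, pow_succ, lt_irrefl, if_false, smul_zero, mul_assoc, add_zero, Nat.add_sub_cancel, Nat.succ_ne_zero, if_true]
    simp only [mul_comm z]
    abel

theorem poly_aux {𝓐 : Type*} [Ring 𝓐] [Algebra ℂ 𝓐] (a b : 𝓐) (l : ℕ) (Q : Polynomial ℂ)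
    (hQ : Q.degree < l) : ∃ c : ℕ → 𝓐, ∀ z : ℂ, Polynomial.aeval (a + z • b) Q = 
      ∑ j ∈ Finset.range l, z ^ j • c j := by
  have h := fun n => expand_aux a b 0 1 (by simp) (by simp) (by simp) n
  choose c hc using h
  refine ⟨fun j => ∑ i ∈ Finset.range l, Q.coeff i • (if j < i then c i j else if j = i then b ^ i else 0), ?_⟩
  intro z
  have hsum : ∀ i, i < l → (a + z • b) ^ i = ∑ j ∈ Finset.range l, z ^ j • 
      (if j < i then c i j else if j = i then b ^ i else 0) := by
    intro i hi
    have := hc i z 1 (by simp) (by simp)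
    simp only [mul_one, one_mul] at this
    rw [this, ← Finset.sum_range_add_sum_Ico _ (show i + 1 ≤ l from hi), Finset.sum_range_succ]
    rw [Finset.sum_eq_zero (s := Finset.Ico (i+1) l)]
    · simp only [lt_irrefl, if_false, if_true, add_zero]
      congr 1
      apply Finset.sum_congr rfl
      intro x hx
      rw [if_pos (Finset.mem_range.mp hx)]
    · intro x hx
      have := Finset.mem_Ico.mp hx
      rw [if_neg (by omega), if_neg (by omega), smul_zero]
  have : Polynomial.aeval (a + z • b) Q = ∑ i ∈ Finset.range l, Q.coeff i • (a + z • b) ^ i := by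
    rw [Polynomial.aeval_eq_sum_range]
    by_cases hQ0 : Q = 0
    · simp [hQ0]
    have : Q.natDegree < l := (Polynomial.natDegree_lt_iff_degree_lt hQ0).mpr hQ
    rw [← Finset.sum_range_add_sum_Ico _ (show Q.natDegree + 1 ≤ l from this), left_eq_add]
    apply Finset.sum_eq_zero
    intro x hx
    rw [Polynomial.coeff_eq_zero_of_natDegree_lt (by have := Finset.mem_Ico.mp hx; omega), zero_smul]
  rw [this]
  simp only [Finset.smul_sum]
  rw [Finset.sum_comm]
  apply Finset.sum_congr rfl
  intro i hi
  rw [hsum i (Finset.mem_range.mp hi), Finset.smul_sum]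
  apply Finset.sum_congr rfl
  intro j hj
  rw [smul_comm]

theorem parity_aux {E : Type*} [AddCommGroup E] [Module ℂ E] (c : ℕ → E) (n : ℕ) :
    (∑ j ∈ Finset.range (2 * n), Complex.I ^ j • c j) + (∑ j ∈ Finset.range (2 * n), (-Complex.I) ^ j • c j)
     = (2 : ℂ) • ∑ m ∈ Finset.range n, ((-1 : ℂ) ^ m) • c (2 * m) := by
  induction n with
  | zero => simp
  | succ n ih =>
    rw [show 2 * (n + 1) = 2 * n + 1 + 1 by ring, Finset.sum_range_succ, Finset.sum_range_succ, Finset.sum_range_succ,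
      Finset.sum_range_succ, Finset.sum_range_succ, smul_add, ← ih]
    have e1 : Complex.I ^ (2 * n) = (-1) ^ n := by rw [pow_mul, Complex.I_sq]
    have e2 : (-Complex.I) ^ (2 * n) = (-1) ^ n := by rw [pow_mul, neg_sq, Complex.I_sq]
    rw [pow_succ, pow_succ, e1, e2, mul_neg, neg_smul, two_smul]
    abel

theorem norm_lt_aux (A : H →L[ℂ] H) (hA : IsSelfAdjoint A)
    (hspA : spectrum ℂ A ⊆ (fun x : ℝ => (x : ℂ)) '' Set.Ioo (-1 : ℝ) 1) : ‖A‖ < 1 := by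
  rcases subsingleton_or_nontrivial H with h | h
  · rw [Subsingleton.elim A 0]; simp
  obtain ⟨z, hz, hz2⟩ := spectrum.exists_nnnorm_eq_spectralRadius A
  rw [hA.spectralRadius_eq_nnnorm] at hz2
  obtain ⟨x, hx, rfl⟩ := hspA hz
  have h3 : ‖(x : ℂ)‖₊ = ‖A‖₊ := ENNReal.coe_injective hz2
  have h4 : ‖(x : ℂ)‖ = ‖A‖ := congrArg NNReal.toReal h3
  rw [← h4, Complex.norm_real, Real.norm_eq_abs, abs_lt]
  exact hx

theorem re_inner_aux (A B : H →L[ℂ] H) (hB : IsSelfAdjoint B) (s : ℝ) (hs : |s| ≤ 1) (w : ℝ) (x : H) :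
    (1 - ‖A‖) * ‖x‖ ^ 2 ≤ RCLike.re (inner ℂ ((1 - (s : ℂ) • (A + ((w : ℂ) * Complex.I) • B)) x) x) := by
  have hBr : (inner ℂ (B x) x).im = 0 := by
    have := hB.isSymmetric.coe_reApplyInnerSelf_apply x
    have := congrArg Complex.im this
    simpa using this.symm
  have hAx : |(inner ℂ (A x) x).re| ≤ ‖A‖ * ‖x‖ ^ 2 := by
    calc |(inner ℂ (A x) x).re| ≤ ‖inner ℂ (A x) x‖ := Complex.abs_re_le_norm _
      _ ≤ ‖A x‖ * ‖x‖ := norm_inner_le_norm _ _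
      _ ≤ ‖A‖ * ‖x‖ * ‖x‖ := by gcongr; exact A.le_opNorm x
      _ = _ := by ring
  have hxx : (inner ℂ x x : ℂ).re = ‖x‖ ^ 2 := by
    have := inner_self_eq_norm_sq (𝕜 := ℂ) x
    simpa using this
  have e : RCLike.re (inner ℂ ((1 - (s : ℂ) • (A + ((w : ℂ) * Complex.I) • B)) x) x) = 
      ‖x‖ ^ 2 - s * (inner ℂ (A x) x).re := by
    simp [hBr]
    norm_cast
  rw [e]
  have : s * (inner ℂ (A x) x).re ≤ ‖A‖ * ‖x‖ ^ 2 := by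
    calc s * (inner ℂ (A x) x).re ≤ |s * (inner ℂ (A x) x).re| := le_abs_self _
      _ = |s| * |(inner ℂ (A x) x).re| := abs_mul _ _
      _ ≤ 1 * (‖A‖ * ‖x‖ ^ 2) := by gcongr
      _ = _ := one_mul _
  linarith

theorem isUnit_aux (A B : H →L[ℂ] H) (hB : IsSelfAdjoint B) (hA1 : ‖A‖ < 1) (s : ℝ) (hs : |s| ≤ 1) (w : ℝ) :
    IsUnit (1 - (s : ℂ) • (A + ((w : ℂ) * Complex.I) • B)) := by
  refine ContinuousLinearMap.isUnit_of_forall_le_norm_inner_map _ (c := (1 - ‖A‖).toNNReal)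
    (by simpa using hA1) ?_
  intro x
  rw [Real.coe_toNNReal _ (by linarith)]
  have := re_inner_aux A B hB s hs w x
  calc ‖x‖ ^ 2 * (1 - ‖A‖) = (1 - ‖A‖) * ‖x‖ ^ 2 := mul_comm _ _
    _ ≤ _ := this
    _ ≤ _ := RCLike.re_le_norm _

theorem D_pos_aux (A : H →L[ℂ] H) (hA : IsSelfAdjoint A) (hA1 : ‖A‖ < 1) (s : ℝ) (hs : |s| ≤ 1) :
    0 ≤ 1 - (s : ℂ) • A := by
  rw [ContinuousLinearMap.nonneg_iff_isPositive, ContinuousLinearMap.isPositive_def']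
  constructor
  · have h1 : IsSelfAdjoint (s : ℂ) := Complex.conj_ofReal s
    exact (IsSelfAdjoint.one _).sub (h1.smul hA)
  · intro x
    have := re_inner_aux A 0 (by simp) s hs 0 x
    simp only [smul_zero, add_zero] at this
    refine le_trans ?_ this
    have : 0 ≤ 1 - ‖A‖ := by linarith
    positivity

theorem pos_aux (D B g r r' : H →L[ℂ] H) (s : ℝ) (hD : 0 ≤ D) (hB : IsSelfAdjoint B)
    (hDg : D * g = 1) (hgD : g * D = 1) 
    (h1 : (D - ((s : ℂ) * Complex.I) • B) * r = 1) (h2 : r * (D - ((s : ℂ) * Complex.I) • B) = 1)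
    (h1' : (D + ((s : ℂ) * Complex.I) • B) * r' = 1) (h2' : r' * (D + ((s : ℂ) * Complex.I) • B) = 1) (n : ℕ) :
    0 ≤ (g * B) ^ (2 * n) * (r + r') := by
  have hDs : star D = D := (IsSelfAdjoint.of_nonneg hD)
  have hBs : star B = B := hB
  have hgs : star g = g := by
    have : star g * D = 1 := by rw [← hDs, ← star_mul, hDg, star_one]
    calc star g = star g * (D * g) := by rw [hDg, mul_one]
      _ = g := by rw [← mul_assoc, this, one_mul]
  have hstar : star (D - ((s : ℂ) * Complex.I) • B) = D + ((s : ℂ) * Complex.I) • B := by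
    simp [star_sub, star_smul, hDs, hBs]
  have hr' : star r = r' := by
    have : star r * (D + ((s : ℂ) * Complex.I) • B) = 1 := by
      rw [← hstar, ← star_mul, h1, star_one]
    calc star r = star r * ((D + ((s : ℂ) * Complex.I) • B) * r') := by rw [h1', mul_one]
      _ = r' := by rw [← mul_assoc, this, one_mul]
  have semi : ∀ (z : ℂ) (q : H →L[ℂ] H), (D - z • B) * q = 1 → q * (D - z • B) = 1 → g * B * q = q * (B * g) := by
    intro z q hq1 hq2
    have e : (D - z • B) * (g * B) = (B * g) * (D - z • B) := by
      have e1 : (D - z • B) * (g * B) = (D * g) * B - z • (B * g * B) := by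
        simp only [sub_mul, smul_mul_assoc, mul_assoc]
      have e2 : (B * g) * (D - z • B) = B * (g * D) - z • (B * g * B) := by
        simp only [mul_sub, mul_smul_comm, mul_assoc]
      rw [e1, e2, hDg, hgD]; simp
    calc g * B * q = (q * (D - z • B)) * (g * B) * q := by rw [hq2, one_mul]
      _ = q * ((D - z • B) * (g * B)) * q := by simp only [mul_assoc]
      _ = q * (B * g) * ((D - z • B) * q) := by rw [e]; simp only [mul_assoc]
      _ = _ := by rw [hq1, mul_one]
  have s1 := semi _ r h1 h2
  have s2 := semi (-((s : ℂ) * Complex.I)) r' (by simpa using h1') (by simpa using h2')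
  have s3 : SemiconjBy (r + r') (B * g) (g * B) := by
    unfold SemiconjBy
    rw [mul_add, s1, s2, add_mul]
  have s4 := s3.pow_right n
  have hst : star ((g * B) ^ n) = (B * g) ^ n := by rw [star_pow, star_mul, hBs, hgs]
  have e : r + r' = r' * ((2 : ℂ) • D) * star r' := by
    have hr : star r' = r := by rw [← hr', star_star]
    rw [hr]
    have : (2 : ℂ) • D = (D - ((s : ℂ) * Complex.I) • B) + (D + ((s : ℂ) * Complex.I) • B) := by
      rw [two_smul]; abel
    rw [this, mul_add, add_mul, h2', mul_assoc, h1]; simp [add_comm]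
  have hpos : 0 ≤ r + r' := by
    rw [e]
    apply star_right_conjugate_nonneg
    rw [two_smul]; exact add_nonneg hD hD
  have : (g * B) ^ (2 * n) * (r + r') = (g * B) ^ n * (r + r') * star ((g * B) ^ n) := by
    rw [hst, two_mul, pow_add, mul_assoc, mul_assoc, s4.eq]
  rw [this]
  exact star_right_conjugate_nonneg hpos _

noncomputable def lamEl (H : Type*) [NormedAddCommGroup H] [InnerProductSpace ℂ H] [CompleteSpace H] :
    C(Set.Icc (-1 : ℝ) 1, H →L[ℂ] H) :=
  ⟨fun s => ((s : ℝ) : ℂ) • (1 : H →L[ℂ] H), by fun_prop⟩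

noncomputable def pj (s : ℝ) : Set.Icc (-1 : ℝ) 1 := Set.projIcc (-1 : ℝ) 1 (by norm_num) s

theorem pj_cont : Continuous pj := continuous_projIcc (h := by norm_num)

theorem pj_of_mem (s : ℝ) (hs : s ∈ Set.Icc (-1 : ℝ) 1) : pj s = ⟨s, hs⟩ := Set.projIcc_of_mem _ hs

theorem pj_integrable (μ : Measure ℝ) [IsFiniteMeasure μ] (g : C(Set.Icc (-1 : ℝ) 1, H →L[ℂ] H)) :
    Integrable (fun s => g (pj s)) μ :=
  Integrable.of_bound (g.continuous.comp pj_cont).aestronglyMeasurable ‖g‖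
    (Filter.Eventually.of_forall fun s => g.norm_coe_le_norm _)

noncomputable def intL (μ : Measure ℝ) [IsFiniteMeasure μ] :
    C(Set.Icc (-1 : ℝ) 1, H →L[ℂ] H) →L[ℂ] (H →L[ℂ] H) :=
  LinearMap.mkContinuous
    { toFun := fun g => ∫ s, g (pj s) ∂μ
      map_add' := fun g h => integral_add (pj_integrable μ g) (pj_integrable μ h)
      map_smul' := fun c g => integral_smul c _ } (μ.real Set.univ) (by
    intro g
    rw [mul_comm]
    exact norm_integral_le_of_norm_le_const (Filter.Eventually.of_forall fun s => g.norm_coe_le_norm _))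

theorem intL_apply (μ : Measure ℝ) [IsFiniteMeasure μ] (g : C(Set.Icc (-1 : ℝ) 1, H →L[ℂ] H)) :
    intL μ g = ∫ s, g (pj s) ∂μ := rfl

theorem intL_nonneg (μ : Measure ℝ) [IsFiniteMeasure μ] (g : C(Set.Icc (-1 : ℝ) 1, H →L[ℂ] H))
    (hg : ∀ s, 0 ≤ g s) : 0 ≤ intL μ g := by
  rw [intL_apply]
  exact integral_nonneg fun s => hg _

theorem invEl_apply (w : C(Set.Icc (-1 : ℝ) 1, H →L[ℂ] H)) (hw : IsUnit w) (s : Set.Icc (-1 : ℝ) 1) :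
    (Ring.inverse w) s = Ring.inverse (w s) := by
  have h1 : w s * (Ring.inverse w) s = 1 := by
    rw [← ContinuousMap.mul_apply, Ring.mul_inverse_cancel _ hw, ContinuousMap.one_apply]
  have h2 : (Ring.inverse w) s * w s = 1 := by
    rw [← ContinuousMap.mul_apply, Ring.inverse_mul_cancel _ hw, ContinuousMap.one_apply]
  exact (Ring.inverse_unit (⟨w s, (Ring.inverse w) s, h1, h2⟩ : (H →L[ℂ] H)ˣ)).symm

noncomputable def wEl (Y : H →L[ℂ] H) : C(Set.Icc (-1 : ℝ) 1, H →L[ℂ] H) :=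
  1 - lamEl H * ContinuousMap.const _ Y

theorem wEl_apply (Y : H →L[ℂ] H) (s : Set.Icc (-1 : ℝ) 1) :
    wEl Y s = 1 - ((s : ℝ) : ℂ) • Y := by
  simp [wEl, lamEl]

theorem ae_aux (μ : Measure ℝ) (hμ : μ (Set.Icc (-1 : ℝ) 1)ᶜ = 0) (l : ℕ) (Y : H →L[ℂ] H) (hY : IsUnit (wEl Y)) :
    (fun s : ℝ => ((ContinuousMap.const (Set.Icc (-1 : ℝ) 1) Y) ^ l * Ring.inverse (wEl Y) : C(Set.Icc (-1 : ℝ) 1, H →L[ℂ] H)) (pj s)) =ᵐ[μ] 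
    fun s : ℝ => Y ^ l * Ring.inverse (1 - (s : ℂ) • Y) := by
  have : ∀ᵐ s ∂μ, s ∈ Set.Icc (-1 : ℝ) 1 := hμ
  filter_upwards [this] with s hs
  rw [pj_of_mem s hs, ContinuousMap.mul_apply, invEl_apply _ hY, wEl_apply]
  simp

theorem fcal_eq_aux (P : Polynomial ℝ) (μ : Measure ℝ) [IsFiniteMeasure μ] (hμ : μ (Set.Icc (-1 : ℝ) 1)ᶜ = 0)
    (l : ℕ) (Y : H →L[ℂ] H) (hY : IsUnit (wEl Y)) :
    fcal P μ l Y = Polynomial.aeval Y (P.map Complex.ofRealHom) + 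
      intL μ ((ContinuousMap.const _ Y) ^ l * Ring.inverse (wEl Y)) := by
  rw [fcal, intL_apply, integral_congr_ae (ae_aux μ hμ l Y hY)]

theorem integrable_aux (μ : Measure ℝ) [IsFiniteMeasure μ] (hμ : μ (Set.Icc (-1 : ℝ) 1)ᶜ = 0)
    (l : ℕ) (Y : H →L[ℂ] H) (hY : IsUnit (wEl Y)) :
    Integrable (fun s : ℝ => Y ^ l * Ring.inverse (1 - (s : ℂ) • Y)) μ :=
  (pj_integrable μ _).congr (ae_aux μ hμ l Y hY)

theorem commute_inverse_aux {R : Type*} [Ring R] {a b : R} (h : Commute a b) : Commute a (Ring.inverse b) := by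
  by_cases hb : IsUnit b
  · obtain ⟨u, rfl⟩ := hb
    rw [Ring.inverse_unit]
    exact h.units_inv_right
  · rw [Ring.inverse_non_unit _ hb]
    exact Commute.zero_right _

theorem star_fcal_aux (P : Polynomial ℝ) (μ : Measure ℝ) (l : ℕ) (Y : H →L[ℂ] H) :
    star (fcal P μ l Y) = fcal P μ l (star Y) := by
  unfold fcal
  rw [star_add]
  congr 1
  · rw [Polynomial.aeval_eq_sum_range, Polynomial.aeval_eq_sum_range, star_sum]
    apply Finset.sum_congr rfl
    intro i hi
    rw [star_smul, star_pow]
    simp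
  · have := (starL' ℝ (A := H →L[ℂ] H)).integral_comp_comm (μ := μ) (fun s : ℝ => Y ^ l * Ring.inverse (1 - (s : ℂ) • Y))
    simp only [starL'_apply] at this
    rw [← this]
    congr 1
    ext1 s
    have hc : star (1 - (s : ℂ) • Y) = 1 - (s : ℂ) • star Y := by simp
    rw [star_mul, star_pow, ← Ring.inverse_star, hc]
    have : Commute (star Y) (1 - (s : ℂ) • star Y) := 
      (Commute.one_right _).sub_right ((Commute.refl _).smul_right _)
    exact ((commute_inverse_aux this).pow_left l).symm.eq

/-- The `(4k−2)`-tone case of the main theorem: for `f(Y) = P(Y) + ∫ Y^{4k−2}(I−λY)⁻¹ dμ(λ)`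
with `deg P < 4k−2` and `μ` a finite positive measure on `[−1,1]`, all the relevant operators
are invertible, the Bochner integrals exist, and
`Re f(X) ≤ Σ_{m=0}^{2k−2} ((−1)^m/(2m)!) D^{2m}f(A;B)` for `X = A + iB`. -/
theorem stmt8 [TopologicalSpace.SeparableSpace H] (hinf : ¬ FiniteDimensional ℂ H)
    (k : ℕ) (hk : 1 ≤ k) (P : Polynomial ℝ) (hP : P.degree < ((4 * k - 2 : ℕ) : WithBot ℕ))
    (μ : Measure ℝ) [IsFiniteMeasure μ] (hμ : μ (Set.Icc (-1 : ℝ) 1)ᶜ = 0)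
    (A B X : H →L[ℂ] H) (hA : IsSelfAdjoint A) (hB : IsSelfAdjoint B)
    (hspA : spectrum ℂ A ⊆ (fun x : ℝ => (x : ℂ)) '' Set.Ioo (-1 : ℝ) 1)
    (hX : X = A + Complex.I • B) :
    (∀ s ∈ Set.Icc (-1 : ℝ) 1, IsUnit (1 - (s : ℂ) • X)) ∧
    (∃ δ > (0 : ℝ), ∀ t : ℝ, |t| < δ →
        ∀ s ∈ Set.Icc (-1 : ℝ) 1, IsUnit (1 - (s : ℂ) • (A + t • B))) ∧
    Integrable (fun s : ℝ => X ^ (4 * k - 2) * Ring.inverse (1 - (s : ℂ) • X)) μ ∧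
    (∃ δ > (0 : ℝ), ∀ t : ℝ, |t| < δ →
        Integrable
          (fun s : ℝ =>
            (A + t • B) ^ (4 * k - 2) * Ring.inverse (1 - (s : ℂ) • (A + t • B))) μ) ∧
    ((∑ m ∈ Finset.range (2 * k - 1),
        ((-1 : ℝ) ^ m / (Nat.factorial (2 * m) : ℝ)) •
          iteratedDeriv (2 * m) (fun t : ℝ => fcal P μ (4 * k - 2) (A + t • B)) 0)
      - opRe (fcal P μ (4 * k - 2) X)).IsPositive := by
  have hA1 := norm_lt_aux A hA hspA
  have hunit : ∀ w : ℝ, IsUnit (wEl (A + ((w : ℂ) * Complex.I) • B)) := by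
    intro w
    rw [ContinuousMap.isUnit_iff_forall_isUnit]
    intro s
    rw [wEl_apply]
    exact isUnit_aux A B hB hA1 s (abs_le.mpr s.2) w
  have huX : IsUnit (wEl X) := by
    have := hunit 1
    rw [hX]; simpa using this
  have huX' : IsUnit (wEl (A + (-Complex.I) • B)) := by
    have := hunit (-1)
    simpa using this
  have huA : IsUnit (wEl A) := by
    have := hunit 0
    simpa using this
  have hpt : ∀ Y : H →L[ℂ] H, IsUnit (wEl Y) → ∀ s ∈ Set.Icc (-1 : ℝ) 1, IsUnit (1 - (s : ℂ) • Y) := by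
    intro Y hY s hs
    rw [ContinuousMap.isUnit_iff_forall_isUnit] at hY
    have := hY ⟨s, hs⟩
    rwa [wEl_apply] at this
  set b : C(Set.Icc (-1 : ℝ) 1, H →L[ℂ] H) := ContinuousMap.const _ B with hb
  set a : C(Set.Icc (-1 : ℝ) 1, H →L[ℂ] H) := ContinuousMap.const _ A with ha
  have hconst : ∀ z : ℂ, ContinuousMap.const (Set.Icc (-1 : ℝ) 1) (A + z • B) = a + z • b := by
    intro z; ext s x; simp [ha, hb]
  have hwz : ∀ z : ℂ, wEl (A + z • B) = 1 - lamEl H * (a + z • b) := by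
    intro z; rw [wEl, hconst]
  have hwt : ∀ t : ℝ, wEl (A + t • B) = wEl A - t • (lamEl H * b) := by
    intro t
    ext1 s
    rw [wEl_apply]
    simp only [ContinuousMap.sub_apply, wEl_apply, ContinuousMap.smul_apply, ContinuousMap.mul_apply, hb, ContinuousMap.const_apply]
    simp [lamEl, smul_add, smul_comm t, sub_sub]
  have hcw : ContDiff ℝ (4 * k - 2 : ℕ) (fun t : ℝ => wEl (A + t • B)) := by
    simp only [hwt]
    fun_prop
  have hev : ∀ᶠ t : ℝ in nhds 0, IsUnit (wEl (A + t • B)) := by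
    have h0 : IsUnit (wEl (A + (0 : ℝ) • B)) := by simpa using huA
    exact hcw.continuous.continuousAt.eventually (Units.isOpen.mem_nhds h0)
  obtain ⟨δ, hδ, hδ2⟩ := Metric.eventually_nhds_iff.mp hev
  have hδ3 : ∀ t : ℝ, |t| < δ → IsUnit (wEl (A + t • B)) := fun t ht => hδ2 (by simpa using ht)
  refine ⟨hpt X huX, ⟨δ, hδ, fun t ht => hpt _ (hδ3 t ht)⟩, integrable_aux μ hμ _ X huX,
    ⟨δ, hδ, fun t ht => integrable_aux μ hμ _ _ (hδ3 t ht)⟩, ?_⟩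
  set l := 4 * k - 2 with hl
  set g := Ring.inverse (wEl A) with hg
  have hg1 : wEl A * g = 1 := Ring.mul_inverse_cancel _ huA
  have hg2 : g * wEl A = 1 := Ring.inverse_mul_cancel _ huA
  obtain ⟨c, hc⟩ := expand_aux a b (lamEl H) g (by
    intro x; ext1 s; simp [lamEl]) hg1 hg2 l
  obtain ⟨d, hd⟩ := poly_aux A B l (P.map Complex.ofRealHom) 
    (lt_of_le_of_lt Polynomial.degree_map_le hP)
  have main : ∀ z : ℂ, IsUnit (wEl (A + z • B)) → fcal P μ l (A + z • B) = 
      (∑ j ∈ Finset.range l, z ^ j • (d j + intL μ (c j))) + 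
        z ^ l • intL μ ((g * b) ^ l * Ring.inverse (wEl (A + z • B))) := by
    intro z hz
    rw [fcal_eq_aux P μ hμ l _ hz, hd, hconst, hc z (Ring.inverse (wEl (A + z • B)))
      (by rw [← hwz]; exact Ring.mul_inverse_cancel _ hz) 
      (by rw [← hwz]; exact Ring.inverse_mul_cancel _ hz)]
    rw [map_add, map_sum, map_smul]
    simp only [map_smul, smul_add, Finset.sum_add_distrib]
    abel
  have hder : ∀ n < l, iteratedDeriv n (fun t : ℝ => fcal P μ l (A + t • B)) 0 = 
      (n.factorial : ℝ) • (d n + intL μ (c n)) := by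
    intro n hn
    refine taylor_aux l _ (fun t : ℝ => intL μ ((g * b) ^ l * Ring.inverse (wEl (A + t • B)))) 
      (fun j => d j + intL μ (c j)) ?_ ?_ n hn
    · have h1 : ContDiffAt ℝ l (fun t : ℝ => Ring.inverse (wEl (A + t • B))) 0 := by
        have h0 : wEl (A + (0 : ℝ) • B) = huA.unit := by simp
        have := contDiffAt_ringInverse ℝ (n := l) huA.unit
        rw [← h0] at this
        exact ContDiffAt.comp (0 : ℝ) this hcw.contDiffAt
      have h2 : ContDiffAt ℝ l (fun t : ℝ => (g * b) ^ l * Ring.inverse (wEl (A + t • B))) 0 :=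
        contDiffAt_const.mul h1
      exact ((intL μ).restrictScalars ℝ).contDiff.contDiffAt.comp (0 : ℝ) h2
    · filter_upwards [hev] with t ht
      have := main t (by simpa using ht)
      simpa only [← Complex.ofReal_pow, Complex.coe_smul] using this
  have hle : l = 2 * (2 * k - 1) := by omega
  have hIl : Complex.I ^ l = -1 := by
    rw [hle, pow_mul, Complex.I_sq, Odd.neg_one_pow]
    exact ⟨k - 1, by omega⟩
  have hIl' : (-Complex.I) ^ l = -1 := by
    rw [hle, pow_mul, neg_sq, Complex.I_sq, Odd.neg_one_pow]
    exact ⟨k - 1, by omega⟩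
  have hsX : star X = A + (-Complex.I) • B := by
    rw [hX, star_add, star_smul, hA.star_eq, hB.star_eq]; simp
  have hsum : (∑ m ∈ Finset.range (2 * k - 1),
        ((-1 : ℝ) ^ m / (Nat.factorial (2 * m) : ℝ)) •
          iteratedDeriv (2 * m) (fun t : ℝ => fcal P μ l (A + t • B)) 0) = 
      ∑ m ∈ Finset.range (2 * k - 1), (-1 : ℂ) ^ m • (d (2 * m) + intL μ (c (2 * m))) := by
    apply Finset.sum_congr rfl
    intro m hm
    rw [hder (2 * m) (by have := Finset.mem_range.mp hm; omega), smul_smul, 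
      div_mul_cancel₀ _ (by positivity), ← Complex.coe_smul]
    simp
  have hpar := parity_aux (fun j => d j + intL μ (c j)) (2 * k - 1)
  rw [← hle] at hpar
  have hfinal : (∑ m ∈ Finset.range (2 * k - 1),
        ((-1 : ℝ) ^ m / (Nat.factorial (2 * m) : ℝ)) •
          iteratedDeriv (2 * m) (fun t : ℝ => fcal P μ l (A + t • B)) 0)
      - opRe (fcal P μ l X) = (2 : ℂ)⁻¹ • intL μ ((g * b) ^ l * 
        (Ring.inverse (wEl (A + Complex.I • B)) + Ring.inverse (wEl (A + (-Complex.I) • B)))) := by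
    rw [hsum, opRe, star_fcal_aux, hsX, main _ huX', hX, main _ (hX ▸ huX), hIl, hIl', 
      mul_add, map_add]
    rw [show ∀ x y z w : H →L[ℂ] H, x + y + (z + w) = (x + z) + (y + w) from fun x y z w => by abel]
    rw [hpar, smul_add (2 : ℂ)⁻¹, smul_smul]
    simp
    abel
  rw [hfinal, ← ContinuousLinearMap.nonneg_iff_isPositive]
  have hnn : 0 ≤ intL μ ((g * b) ^ l * 
        (Ring.inverse (wEl (A + Complex.I • B)) + Ring.inverse (wEl (A + (-Complex.I) • B)))) := by
    apply intL_nonneg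
    intro s
    have hs := abs_le.mpr s.2
    rw [hle]
    have hev2 : ∀ w w' : C(Set.Icc (-1 : ℝ) 1, H →L[ℂ] H), w * w' = 1 → w s * w' s = 1 := by
      intro w w' h
      rw [← ContinuousMap.mul_apply, h, ContinuousMap.one_apply]
    have q1 : wEl (A + Complex.I • B) s = (1 - ((s : ℝ) : ℂ) • A) - (((s : ℝ) : ℂ) * Complex.I) • B := by
      rw [wEl_apply, smul_add, smul_smul, sub_sub]
    have q2 : wEl (A + (-Complex.I) • B) s = (1 - ((s : ℝ) : ℂ) • A) + (((s : ℝ) : ℂ) * Complex.I) • B := by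
      rw [wEl_apply, smul_add, smul_smul, mul_neg, neg_smul, ← sub_sub, sub_neg_eq_add]
    have q0 := wEl_apply A s
    rw [hX] at huX
    have := pos_aux (1 - ((s : ℝ) : ℂ) • A) B (g s) (Ring.inverse (wEl (A + Complex.I • B)) s)
      (Ring.inverse (wEl (A + (-Complex.I) • B)) s) s (D_pos_aux A hA hA1 s hs) hB
      (by rw [← q0]; exact hev2 _ _ hg1) (by rw [← q0]; exact hev2 _ _ hg2)
      (by rw [← q1]; exact hev2 _ _ (Ring.mul_inverse_cancel _ huX))
      (by rw [← q1]; exact hev2 _ _ (Ring.inverse_mul_cancel _ huX))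
      (by rw [← q2]; exact hev2 _ _ (Ring.mul_inverse_cancel _ huX'))
      (by rw [← q2]; exact hev2 _ _ (Ring.inverse_mul_cancel _ huX')) (2 * k - 1)
    exact this
  rw [ContinuousLinearMap.nonneg_iff_isPositive] at hnn ⊢
  exact hnn.smul_of_nonneg (by norm_num [Complex.le_def])
end

section
/- Let k ∈ ℕ and set l := 4k. Let P be a polynomial with real coefficients of degree < l and let μ be a finite positive Borel measure on [−1, 1]. Let A, B be bounded self-adjoint operators on H with the spectrum of A contained in (−1, 1), and set X := A + iB. Then for every λ ∈ [−1, 1] the operators I − λX and I − λ(A + tB) (for real t near 0) are invertible, the Bochner integrals defining f(Y) := P(Y) + ∫_{[−1,1]} Y^{l} (I − λY)^{-1} dμ(λ) exist for Y = X and Y = A + tB, and Re f(X) ≥ Σ_{m=0}^{2k−1} ((−1)^m / (2m)!) · D^{2m}f(A;B), where D^{m}f(A;B) denotes the m-th derivative at t = 0 of the map t ↦ f(A + tB). -/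
open ContinuousLinearMap MeasureTheory

variable {H : Type*} [NormedAddCommGroup H] [InnerProductSpace ℂ H] [CompleteSpace H]

open scoped Topology

/-! ### Power series facts -/

lemma st_series {E : Type*} [NormedAddCommGroup E] [NormedSpace ℝ E] [CompleteSpace E]
    (f : ℝ → E) (T : ℕ → E) (h : ∀ᶠ t in 𝓝 (0 : ℝ), HasSum (fun n => t ^ n • T n) (f t)) :
    HasFPowerSeriesAt f (fun n => ContinuousMultilinearMap.mkPiRing ℝ (Fin n) (T n)) 0 := by
  refine hasFPowerSeriesAt_iff.2 ?_
  filter_upwards [h] with t ht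
  simpa [FormalMultilinearSeries.coeff] using ht

lemma st_iter {E : Type*} [NormedAddCommGroup E] [NormedSpace ℝ E] [CompleteSpace E]
    (f : ℝ → E) (T : ℕ → E) (h : ∀ᶠ t in 𝓝 (0 : ℝ), HasSum (fun n => t ^ n • T n) (f t)) (n : ℕ) :
    iteratedDeriv n f 0 = (n.factorial : ℝ) • T n := by
  obtain ⟨r, hr⟩ := st_series f T h
  have := hr.factorial_smul (1 : ℝ) n
  rw [iteratedDeriv_eq_iteratedFDeriv, ← this]
  simp [Nat.cast_smul_eq_nsmul]

lemma st_unique {E : Type*} [NormedAddCommGroup E] [NormedSpace ℝ E] [CompleteSpace E]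
    (f : ℝ → E) (T T' : ℕ → E) (h : ∀ᶠ t in 𝓝 (0 : ℝ), HasSum (fun n => t ^ n • T n) (f t))
    (h' : ∀ᶠ t in 𝓝 (0 : ℝ), HasSum (fun n => t ^ n • T' n) (f t)) (n : ℕ) : T n = T' n := by
  have h1 := st_iter f T h n
  rw [st_iter f T' h' n] at h1
  exact (smul_right_injective E (by positivity : (n.factorial : ℝ) ≠ 0) h1).symm

lemma st_shift {E : Type*} [NormedAddCommGroup E] [NormedSpace ℝ E]
    (l : ℕ) (C e : ℕ → E) (t : ℝ) (y : E) (h : HasSum (fun n => t ^ n • e n) y) :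
    HasSum (fun n => t ^ n • (if n < l then C n else e (n - l)))
      (∑ j ∈ Finset.range l, t ^ j • C j + t ^ l • y) := by
  have h1 : HasSum (fun n => t ^ (n + l) • (if n + l < l then C (n + l) else e (n + l - l)))
      (t ^ l • y) := by
    have := h.const_smul (t ^ l)
    refine this.congr_fun ?_ |> fun h => h
    intro n
    simp [smul_smul, pow_add, mul_comm]
  have h2 := (hasSum_nat_add_iff (f := fun n => t ^ n • (if n < l then C n else e (n - l))) l).1 h1
  rw [add_comm]
  convert h2 using 2
  apply Finset.sum_congr rfl
  intro j hj
  rw [if_pos (Finset.mem_range.1 hj)]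

/-! ### Algebra -/

section alg
variable {R : Type*} [Ring R] [Algebra ℂ R]

lemma st_commYS (Y : R) (s : ℂ) : 
    Commute Y (Ring.inverse (1 - s • Y)) := by
  have h : Commute Y (1 - s • Y) := by
    apply Commute.sub_right (Commute.one_right _)
    exact (Commute.refl Y).smul_right s
  by_cases hu : IsUnit (1 - s • Y)
  · obtain ⟨u, hu⟩ := hu
    rw [← hu, Ring.inverse_unit]
    rw [← hu] at h
    exact h.units_inv_right
  · rw [Ring.inverse_non_unit _ hu]
    exact Commute.zero_right _

lemma st_step (A B : R) (s z : ℂ) (hR : IsUnit (1 - s • A))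
    (hS : IsUnit (1 - s • (A + z • B))) :
    (A + z • B) * Ring.inverse (1 - s • (A + z • B)) = Ring.inverse (1 - s • A) * A
      + z • (Ring.inverse (1 - s • A) * B * Ring.inverse (1 - s • (A + z • B))) := by
  have h1 := Ring.inverse_mul_cancel _ hR
  have h2 := Ring.mul_inverse_cancel _ hS
  set Q := Ring.inverse (1 - s • A)
  set S := Ring.inverse (1 - s • (A + z • B))
  have e : (1 - s • A) * (A + z • B) = A * (1 - s • (A + z • B)) + z • B := by
    simp only [sub_mul, mul_sub, mul_add, smul_mul_assoc, mul_smul_comm, one_mul, mul_one,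
      smul_add, smul_sub]
    rw [smul_comm z s (A * B)]
    abel
  calc (A + z • B) * S = (Q * (1 - s • A)) * (A + z • B) * S := by rw [h1, one_mul]
    _ = Q * ((1 - s • A) * (A + z • B)) * S := by simp only [mul_assoc]
    _ = Q * A * ((1 - s • (A + z • B)) * S) + z • (Q * B * S) := by
        rw [e, mul_add, add_mul]; simp only [mul_assoc, mul_smul_comm, smul_mul_assoc]
    _ = _ := by rw [h2, mul_one]

lemma st_swap (A B : R) (s z : ℂ) (hR : IsUnit (1 - s • A))
    (hS : IsUnit (1 - s • (A + z • B))) :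
    Ring.inverse (1 - s • A) * B * Ring.inverse (1 - s • (A + z • B)) =
      Ring.inverse (1 - s • (A + z • B)) * (B * Ring.inverse (1 - s • A)) := by
  have h1 := Ring.inverse_mul_cancel _ hR
  have h1' := Ring.mul_inverse_cancel _ hR
  have h2 := Ring.mul_inverse_cancel _ hS
  have h2' := Ring.inverse_mul_cancel _ hS
  have e0 : 1 - s • (A + z • B) = (1 - s • A) - (s * z) • B := by
    rw [smul_add, smul_smul]; abel
  set Q := Ring.inverse (1 - s • A)
  set S := Ring.inverse (1 - s • (A + z • B))
  have e : (1 - s • (A + z • B)) * (Q * B) = (B * Q) * (1 - s • (A + z • B)) := by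
    rw [e0, sub_mul, mul_sub, ← mul_assoc, h1', mul_assoc B Q, h1]
    simp [mul_assoc]
  calc Q * B * S = S * ((1 - s • (A + z • B)) * (Q * B)) * S := by
        rw [← mul_assoc S, h2', one_mul]
    _ = S * (B * Q) * ((1 - s • (A + z • B)) * S) := by rw [e]; simp only [mul_assoc]
    _ = _ := by rw [h2, mul_one]

lemma st_swap_pow (A B : R) (s z : ℂ) (hR : IsUnit (1 - s • A))
    (hS : IsUnit (1 - s • (A + z • B))) (n : ℕ) :
    (Ring.inverse (1 - s • A) * B) ^ n * Ring.inverse (1 - s • (A + z • B)) =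
      Ring.inverse (1 - s • (A + z • B)) * (B * Ring.inverse (1 - s • A)) ^ n := by
  induction n with
  | zero => simp
  | succ n ih =>
    rw [pow_succ, mul_assoc, st_swap A B s z hR hS, ← mul_assoc, ih, mul_assoc, ← pow_succ]

lemma st_sumshift (A B E : R) (c : ℕ → R) (n : ℕ) (z : ℂ) :
    (∑ j ∈ Finset.range n, z ^ j • c j) * (A + z • B) + z ^ n • E =
      ∑ j ∈ Finset.range (n + 1), z ^ j •
        ((if j < n then c j * A else E) + (Nat.casesOn j 0 (fun j => c j * B) : R)) := by
  simp only [smul_add, Finset.sum_add_distrib]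
  rw [Finset.sum_range_succ (fun j => z ^ j • (if j < n then c j * A else E)),
    Finset.sum_range_succ' (fun j => z ^ j • (Nat.casesOn j 0 (fun j => c j * B) : R))]
  have e1 : ∑ j ∈ Finset.range n, z ^ j • (if j < n then c j * A else E) =
      (∑ j ∈ Finset.range n, z ^ j • c j) * A := by
    rw [Finset.sum_mul]
    refine Finset.sum_congr rfl fun j hj => ?_
    rw [if_pos (Finset.mem_range.1 hj), smul_mul_assoc]
  have e2 : ∑ j ∈ Finset.range n, z ^ (j + 1) • (c j * B) =
      (∑ j ∈ Finset.range n, z ^ j • c j) * (z • B) := by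
    rw [Finset.sum_mul]
    refine Finset.sum_congr rfl fun j hj => ?_
    rw [smul_mul_assoc, mul_smul_comm, smul_smul, pow_succ]
  rw [e1, e2, mul_add]
  have e3 : (Nat.casesOn 0 0 (fun j => c j * B) : R) = 0 := rfl
  rw [e3, smul_zero, if_neg (lt_irrefl n), add_zero]
  abel

lemma st_poly_pow (A B : R) (i N : ℕ) (h : i < N) :
    ∃ c : ℕ → R, ∀ z : ℂ, (A + z • B) ^ i = ∑ j ∈ Finset.range N, z ^ j • c j := by
  induction i generalizing N with
  | zero =>
    refine ⟨fun j => if j = 0 then 1 else 0, fun z => ?_⟩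
    simp [Nat.pos_iff_ne_zero.1 h]
  | succ i ih =>
    obtain ⟨M, rfl⟩ : ∃ M, N = M + 1 := ⟨N - 1, by omega⟩
    obtain ⟨c, hc⟩ := ih M (by omega)
    refine ⟨fun j => (if j < M then c j * A else 0) +
      (Nat.casesOn j 0 (fun j => c j * B) : R), fun z => ?_⟩
    rw [← st_sumshift A B 0 c M z, pow_succ, hc, smul_zero, add_zero]

lemma st_poly (A B : R) (P : Polynomial ℂ) (N : ℕ) (h : P.degree < (N : WithBot ℕ)) :
    ∃ c : ℕ → R, ∀ z : ℂ, Polynomial.aeval (A + z • B) P = ∑ j ∈ Finset.range N, z ^ j • c j := by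
  have key : ∀ i : ℕ, ∃ c : ℕ → R, i < N → ∀ z : ℂ,
      (A + z • B) ^ i = ∑ j ∈ Finset.range N, z ^ j • c j := by
    intro i
    by_cases hi : i < N
    · obtain ⟨c, hc⟩ := st_poly_pow A B i N hi
      exact ⟨c, fun _ => hc⟩
    · exact ⟨0, fun h => absurd h hi⟩
  choose c hc using key
  refine ⟨fun j => ∑ i ∈ Finset.range N, P.coeff i • c i j, fun z => ?_⟩
  have : Polynomial.aeval (A + z • B) P =
      ∑ i ∈ Finset.range N, P.coeff i • (A + z • B) ^ i := by
    by_cases hP : P = 0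
    · simp [hP]
    · exact Polynomial.aeval_eq_sum_range' ((Polynomial.natDegree_lt_iff_degree_lt hP).2 h) _
  rw [this]
  simp only [Finset.smul_sum]
  rw [Finset.sum_comm]
  refine Finset.sum_congr rfl fun i hi => ?_
  rw [hc i (Finset.mem_range.1 hi), Finset.smul_sum]
  exact Finset.sum_congr rfl fun j _ => smul_comm _ _ _

end alg

lemma st_cont (Y : H →L[ℂ] H) (K : Set ℝ) (hK : ∀ s ∈ K, IsUnit (1 - (s : ℂ) • Y)) :
    ContinuousOn (fun s : ℝ => Ring.inverse (1 - (s : ℂ) • Y)) K := by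
  intro s hs
  obtain ⟨u, hu⟩ := hK s hs
  have h1 : ContinuousAt (Ring.inverse : (H →L[ℂ] H) → _) (1 - (s : ℂ) • Y) := by
    rw [← hu]; exact NormedRing.inverse_continuousAt u
  have h2 : ContinuousAt (fun s : ℝ => (1 - (s : ℂ) • Y)) s := by fun_prop
  exact (ContinuousAt.comp (f := fun s : ℝ => (1 - (s : ℂ) • Y)) h1 h2).continuousWithinAt

lemma st_expand (A B : H →L[ℂ] H) (K : Set ℝ) (hK : ∀ s ∈ K, IsUnit (1 - (s : ℂ) • A)) (n : ℕ) :
    ∃ c : ℕ → ℝ → (H →L[ℂ] H), (∀ j, ContinuousOn (c j) K) ∧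
      ∀ s ∈ K, ∀ z : ℂ, IsUnit (1 - (s : ℂ) • (A + z • B)) →
        (A + z • B) ^ n * Ring.inverse (1 - (s : ℂ) • (A + z • B)) =
          ∑ j ∈ Finset.range n, z ^ j • c j s + z ^ n •
            ((Ring.inverse (1 - (s : ℂ) • A) * B) ^ n *
              Ring.inverse (1 - (s : ℂ) • (A + z • B))) := by
  have hcR := st_cont A K hK
  induction n with
  | zero => exact ⟨0, fun j => continuousOn_const, fun s hs z hz => by simp⟩
  | succ n ih =>
    obtain ⟨c, hc, h⟩ := ih
    refine ⟨fun j s => (if j < n then c j s * A else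
        (Ring.inverse (1 - (s : ℂ) • A) * B) ^ n * (Ring.inverse (1 - (s : ℂ) • A) * A))
        + Nat.casesOn j 0 (fun j => c j s * B), ?_, ?_⟩
    · intro j
      refine ContinuousOn.add ?_ ?_
      · split_ifs
        · exact (hc j).mul continuousOn_const
        · exact ((hcR.mul continuousOn_const).pow n).mul (hcR.mul continuousOn_const)
      · cases j with
        | zero => exact continuousOn_const
        | succ j => exact (hc j).mul continuousOn_const
    · intro s hs z hz
      have h1 := h s hs z hz
      have h2 := st_step A B s z (hK s hs) hz
      have h3 := st_commYS (A + z • B) (s : ℂ)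
      rw [← st_sumshift A B _ (fun j => c j s) n z]
      set Y := A + z • B
      set S := Ring.inverse (1 - (s : ℂ) • Y)
      set Q := Ring.inverse (1 - (s : ℂ) • A)
      rw [pow_succ Y, mul_assoc, h3.eq, ← mul_assoc, h1, add_mul, smul_mul_assoc, mul_assoc,
        ← h3.eq, h2, add_assoc, mul_add ((Q * B) ^ n), smul_add, mul_smul_comm, smul_smul,
        ← pow_succ, ← mul_assoc ((Q * B) ^ n) (Q * B), ← pow_succ]

lemma st_norm_lt [Nontrivial H] (A : H →L[ℂ] H) (hA : IsSelfAdjoint A)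
    (hspA : spectrum ℂ A ⊆ (fun x : ℝ => (x : ℂ)) '' Set.Ioo (-1 : ℝ) 1) : ‖A‖ < 1 := by
  obtain ⟨z, hz, hzr⟩ := spectrum.exists_nnnorm_eq_spectralRadius A
  rw [IsSelfAdjoint.spectralRadius_eq_nnnorm hA] at hzr
  obtain ⟨x, hx, rfl⟩ := hspA hz
  have h : ‖((x : ℝ) : ℂ)‖₊ = ‖A‖₊ := ENNReal.coe_injective hzr
  have h' : ‖((x : ℝ) : ℂ)‖ = ‖A‖ := congrArg NNReal.toReal h
  rw [← h', Complex.norm_real, Real.norm_eq_abs, abs_lt]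
  exact hx

lemma st_re_lower (A B : H →L[ℂ] H) (hB : IsSelfAdjoint B) (s : ℝ) (hs : s ∈ Set.Icc (-1 : ℝ) 1)
    (w : H) :
    ‖w‖ ^ 2 * (1 - ‖A‖) ≤ (inner ℂ ((1 - (s : ℂ) • (A + Complex.I • B)) w) w).re := by
  have hBim : (inner ℂ (B w) w).im = 0 := by
    have := (ContinuousLinearMap.isSelfAdjoint_iff_isSymmetric.1 hB).coe_reApplyInnerSelf_apply w
    rw [ContinuousLinearMap.isSelfAdjoint_iff_isSymmetric] at hB
    have h := hB w w
    have h2 := inner_conj_symm (𝕜 := ℂ) (B w) w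
    simp only [coe_coe] at h
    rw [← h] at h2
    exact Complex.conj_eq_iff_im.1 h2
  have e : (inner ℂ ((1 - (s : ℂ) • (A + Complex.I • B)) w) w).re =
      ‖w‖ ^ 2 - s * (inner ℂ (A w) w).re := by
    have h0 : inner ℂ w w = ((‖w‖ ^ 2 : ℝ) : ℂ) := by
      rw [inner_self_eq_norm_sq_to_K]; push_cast; rfl
    simp only [sub_apply, one_apply_eq_self, smul_apply, add_apply, inner_sub_left, inner_smul_left,
      inner_add_left, h0]
    simp only [Complex.sub_re, Complex.mul_re, Complex.add_re, Complex.ofReal_re, hBim,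
      Complex.conj_ofReal, Complex.conj_I, Complex.neg_re, Complex.I_re, Complex.ofReal_im]
    simp
  rw [e]
  have h1 : |(inner ℂ (A w) w).re| ≤ ‖A‖ * ‖w‖ ^ 2 := by
    calc _ ≤ ‖inner ℂ (A w) w‖ := Complex.abs_re_le_norm _
      _ ≤ ‖A w‖ * ‖w‖ := norm_inner_le_norm _ _
      _ ≤ ‖A‖ * ‖w‖ * ‖w‖ := by gcongr; exact A.le_opNorm w
      _ = _ := by ring
  have h2 : s * (inner ℂ (A w) w).re ≤ ‖A‖ * ‖w‖ ^ 2 := by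
    calc _ ≤ |s * (inner ℂ (A w) w).re| := le_abs_self _
      _ = |s| * |(inner ℂ (A w) w).re| := abs_mul _ _
      _ ≤ 1 * |(inner ℂ (A w) w).re| := by gcongr; exact abs_le.2 hs
      _ ≤ _ := by rw [one_mul]; exact h1
  linarith

lemma st_unit (A B : H →L[ℂ] H) (hA1 : ‖A‖ < 1) (hB : IsSelfAdjoint B) (s : ℝ)
    (hs : s ∈ Set.Icc (-1 : ℝ) 1) : IsUnit (1 - (s : ℂ) • (A + Complex.I • B)) := by
  refine isUnit_of_forall_le_norm_inner_map _ (c := Real.toNNReal (1 - ‖A‖))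
    (by simpa using hA1) fun w => ?_
  rw [Real.coe_toNNReal _ (by linarith)]
  exact (st_re_lower A B hB s hs w).trans (Complex.re_le_norm _)

lemma st_unit' (Y : H →L[ℂ] H) (hY : ‖Y‖ < 1) (s : ℝ)
    (hs : s ∈ Set.Icc (-1 : ℝ) 1) : IsUnit (1 - (s : ℂ) • Y) := by
  apply isUnit_one_sub_of_norm_lt_one
  rw [norm_smul, Complex.norm_real, Real.norm_eq_abs]
  have : |s| ≤ 1 := abs_le.2 hs
  nlinarith [norm_nonneg Y]

lemma st_small (A B : H →L[ℂ] H) (hA1 : ‖A‖ < 1) :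
    ∃ δ > (0 : ℝ), ∀ t : ℝ, |t| < δ → ‖A + (t : ℂ) • B‖ < 1 := by
  refine ⟨(1 - ‖A‖) / (‖B‖ + 1), div_pos (by linarith) (by positivity), fun t ht => ?_⟩
  rw [lt_div_iff₀ (by positivity)] at ht
  calc _ ≤ ‖A‖ + ‖(t : ℂ) • B‖ := norm_add_le _ _
    _ = ‖A‖ + |t| * ‖B‖ := by rw [norm_smul, Complex.norm_real, Real.norm_eq_abs]
    _ < 1 := by nlinarith [abs_nonneg t]

lemma st_ae {μ : Measure ℝ} (hμ : μ (Set.Icc (-1 : ℝ) 1)ᶜ = 0) :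
    ∀ᵐ s ∂μ, s ∈ Set.Icc (-1 : ℝ) 1 := by
  rw [ae_iff]; exact hμ

lemma st_int {μ : Measure ℝ} [IsFiniteMeasure μ] (hμ : μ (Set.Icc (-1 : ℝ) 1)ᶜ = 0)
    (F : ℝ → (H →L[ℂ] H)) (hF : ContinuousOn F (Set.Icc (-1 : ℝ) 1)) : Integrable F μ := by
  rw [← Measure.restrict_eq_self_of_ae_mem (st_ae hμ)]
  exact hF.integrableOn_compact isCompact_Icc

/-- the integrated expansion -/
lemma st_fcal (P : Polynomial ℝ) (l : ℕ) (hP : P.degree < (l : WithBot ℕ))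
    (μ : Measure ℝ) [IsFiniteMeasure μ] (hμ : μ (Set.Icc (-1 : ℝ) 1)ᶜ = 0)
    (A B : H →L[ℂ] H) (hA1 : ‖A‖ < 1) :
    ∃ C : ℕ → (H →L[ℂ] H), ∀ z : ℂ,
      (∀ s ∈ Set.Icc (-1 : ℝ) 1, IsUnit (1 - (s : ℂ) • (A + z • B))) →
      fcal P μ l (A + z • B) = ∑ j ∈ Finset.range l, z ^ j • C j + z ^ l •
        ∫ s, (Ring.inverse (1 - (s : ℂ) • A) * B) ^ l *
              Ring.inverse (1 - (s : ℂ) • (A + z • B)) ∂μ := by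
  have hK : ∀ s ∈ Set.Icc (-1 : ℝ) 1, IsUnit (1 - (s : ℂ) • A) := st_unit' A hA1
  obtain ⟨c, hc, h⟩ := st_expand A B _ hK l
  obtain ⟨p, hp⟩ := st_poly A B (P.map Complex.ofRealHom) l
    ((Polynomial.degree_map_le).trans_lt hP)
  refine ⟨fun j => p j + ∫ s, c j s ∂μ, fun z hz => ?_⟩
  have hcR := st_cont A _ hK
  have hcS := st_cont (A + z • B) _ hz
  have e : ∫ s, (A + z • B) ^ l * Ring.inverse (1 - (s : ℂ) • (A + z • B)) ∂μ =
      ∫ s, (∑ j ∈ Finset.range l, z ^ j • c j s + z ^ l •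
            ((Ring.inverse (1 - (s : ℂ) • A) * B) ^ l *
              Ring.inverse (1 - (s : ℂ) • (A + z • B)))) ∂μ := by
    apply integral_congr_ae
    filter_upwards [st_ae hμ] with s hs
    exact h s hs z (hz s hs)
  have hi : ∀ j, Integrable (fun s => z ^ j • c j s) μ := fun j =>
    (st_int hμ _ (hc j)).smul (z ^ j)
  have hi2 : Integrable (fun s : ℝ => z ^ l • ((Ring.inverse (1 - (s : ℂ) • A) * B) ^ l *
      Ring.inverse (1 - (s : ℂ) • (A + z • B)))) μ :=
    (st_int hμ _ (((hcR.mul continuousOn_const).pow l).mul hcS)).smul (z ^ l)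
  rw [fcal, hp, e, integral_add (integrable_finsetSum _ fun j _ => hi j) hi2,
    integral_finsetSum _ (fun j _ => hi j)]
  simp only [integral_smul, smul_add, Finset.sum_add_distrib]
  abel

/-- power series for the remainder integral -/
lemma st_rem (l : ℕ)
    (μ : Measure ℝ) [IsFiniteMeasure μ] (hμ : μ (Set.Icc (-1 : ℝ) 1)ᶜ = 0)
    (A B : H →L[ℂ] H) (hA1 : ‖A‖ < 1) :
    ∃ e : ℕ → (H →L[ℂ] H), ∀ᶠ t : ℝ in 𝓝 (0 : ℝ), HasSum (fun n => t ^ n • e n)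
        (∫ s, (Ring.inverse (1 - (s : ℂ) • A) * B) ^ l *
              Ring.inverse (1 - (s : ℂ) • (A + (t : ℂ) • B)) ∂μ) := by
  have hK : ∀ s ∈ Set.Icc (-1 : ℝ) 1, IsUnit (1 - (s : ℂ) • A) := st_unit' A hA1
  have hcR := st_cont A _ hK
  obtain ⟨k, hk⟩ := isCompact_Icc.exists_bound_of_continuousOn hcR
  set Q : ℝ → (H →L[ℂ] H) := fun s => Ring.inverse (1 - (s : ℂ) • A) with hQ
  have hk0 : 0 ≤ k := (norm_nonneg _).trans (hk 0 (by simp))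
  refine ⟨fun n => ∫ s, (Q s * B) ^ l * (((s : ℂ) • (Q s * B)) ^ n * Q s) ∂μ, ?_⟩
  have hsm : ∀ᶠ t : ℝ in 𝓝 (0 : ℝ), |t| * (k * ‖B‖) < 1 := by
    have : ContinuousAt (fun t : ℝ => |t| * (k * ‖B‖)) 0 := by fun_prop
    exact this.eventually_lt continuousAt_const (by simp)
  filter_upwards [hsm] with t ht
  have hb : ∀ s ∈ Set.Icc (-1 : ℝ) 1, ‖Q s * B‖ ≤ k * ‖B‖ := fun s hs =>
    (norm_mul_le _ _).trans (mul_le_mul_of_nonneg_right (hk s hs) (norm_nonneg _))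
  have hb2 : ∀ s ∈ Set.Icc (-1 : ℝ) 1, ‖t • (s : ℂ) • (Q s * B)‖ ≤ |t| * (k * ‖B‖) := by
    intro s hs
    rw [norm_smul, norm_smul, Complex.norm_real, Real.norm_eq_abs, Real.norm_eq_abs]
    have : |s| ≤ 1 := abs_le.2 hs
    refine mul_le_mul_of_nonneg_left ?_ (abs_nonneg t)
    calc |s| * ‖Q s * B‖ ≤ 1 * (k * ‖B‖) := by gcongr; exact hb s hs
      _ = _ := one_mul _
  simp_rw [← integral_smul]
  have hpt : ∀ (n : ℕ) (s : ℝ), t ^ n • ((Q s * B) ^ l * (((s : ℂ) • (Q s * B)) ^ n * Q s)) =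
      (Q s * B) ^ l * ((t • (s : ℂ) • (Q s * B)) ^ n * Q s) := by
    intro n s
    rw [smul_pow t, smul_mul_assoc, mul_smul_comm]
  simp_rw [hpt]
  have hnorm1 : ‖(1 : H →L[ℂ] H)‖ ≤ 1 := ContinuousLinearMap.norm_id_le
  have npow : ∀ (Z : H →L[ℂ] H) (n : ℕ), ‖Z ^ n‖ ≤ ‖Z‖ ^ n := by
    intro Z n
    rcases Nat.eq_zero_or_pos n with rfl | hn
    · simpa using hnorm1
    · exact norm_pow_le' Z hn
  refine hasSum_integral_of_dominated_convergence
    (fun n _ => (k * ‖B‖) ^ l * ((|t| * (k * ‖B‖)) ^ n * k)) ?_ ?_ ?_ ?_ ?_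
  · intro n
    have h1 : ContinuousOn (fun s : ℝ => t • (s : ℂ) • (Q s * B)) (Set.Icc (-1) 1) :=
      (ContinuousOn.smul (f := fun s : ℝ => (s : ℂ)) (g := fun s => Q s * B)
        Complex.continuous_ofReal.continuousOn (hcR.mul continuousOn_const)).const_smul t
    have h2 : ContinuousOn (fun s : ℝ => (Q s * B) ^ l * ((t • (s : ℂ) • (Q s * B)) ^ n * Q s))
        (Set.Icc (-1) 1) :=
      ((hcR.mul continuousOn_const).pow l).mul ((h1.pow n).mul hcR)
    exact (st_int hμ _ h2).aestronglyMeasurable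
  · intro n
    filter_upwards [st_ae hμ] with s hs
    refine (norm_mul_le _ _).trans ?_
    gcongr
    · exact (npow _ _).trans (by gcongr; exact hb s hs)
    · refine (norm_mul_le _ _).trans ?_
      gcongr
      · exact (npow _ _).trans (by gcongr; exact hb2 s hs)
      · exact hk s hs
  · refine Filter.Eventually.of_forall fun s => ?_
    exact ((summable_geometric_of_lt_one (by positivity) ht).mul_right _).mul_left _
  · exact integrable_const _
  · filter_upwards [st_ae hμ] with s hs
    refine HasSum.mul_left _ ?_
    have hx : ‖t • (s : ℂ) • (Q s * B)‖ < 1 := (hb2 s hs).trans_lt ht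
    set x := t • (s : ℂ) • (Q s * B) with hxd
    have hs1 := (summable_geometric_of_norm_lt_one hx).hasSum.mul_right (Q s)
    convert hs1 using 1
    have hq1 := Ring.inverse_mul_cancel _ (hK s hs)
    have hq2 := Ring.mul_inverse_cancel _ (hK s hs)
    have hfac : (1 - (s : ℂ) • A) * (1 - x) = 1 - (s : ℂ) • (A + (t : ℂ) • B) := by
      have : (1 - (s : ℂ) • A) * x = (s : ℂ) • (t : ℂ) • B := by
        rw [hxd, ← Complex.coe_smul t, mul_smul_comm, mul_smul_comm, ← mul_assoc, hq2, one_mul,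
          smul_comm]
      rw [mul_sub, this, mul_one, smul_add]; abel
    have g1 := geom_series_mul_neg x hx
    have g2 := mul_neg_geom_series x hx
    rw [← hfac]
    rw [Ring.inverse_mul (Or.inl (hK s hs))]
    congr 1
    exact Ring.inverse_unit (⟨1 - x, _, g2, g1⟩ : (H →L[ℂ] H)ˣ)

lemma st_star (P : Polynomial ℝ) (μ : Measure ℝ) (l : ℕ) (Y : H →L[ℂ] H) (hY : IsSelfAdjoint Y) :
    star (fcal P μ l Y) = fcal P μ l Y := by
  have h1 : star (Polynomial.aeval Y (P.map Complex.ofRealHom)) =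
      Polynomial.aeval Y (P.map Complex.ofRealHom) := by
    rw [Polynomial.aeval_eq_sum_range, star_sum]
    refine Finset.sum_congr rfl fun i _ => ?_
    rw [star_smul, star_pow, hY.star_eq, Polynomial.coeff_map]
    simp
  have h2 : star (∫ s, Y ^ l * Ring.inverse (1 - (s : ℂ) • Y) ∂μ) =
      ∫ s, Y ^ l * Ring.inverse (1 - (s : ℂ) • Y) ∂μ := by
    have := ((starL' ℝ : (H →L[ℂ] H) ≃L[ℝ] (H →L[ℂ] H))).integral_comp_comm
      (fun s : ℝ => Y ^ l * Ring.inverse (1 - (s : ℂ) • Y)) (μ := μ)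
    simp only [starL'_apply] at this
    rw [← this]
    congr 1
    ext1 s
    rw [star_mul, ← Ring.inverse_star, star_pow, hY.star_eq, star_sub, star_one, star_smul,
      hY.star_eq, ((st_commYS Y (s : ℂ)).pow_left l).eq]
    simp
  rw [fcal, star_add, h1, h2]

lemma opRe_add (Y Z : H →L[ℂ] H) : opRe (Y + Z) = opRe Y + opRe Z := by
  simp only [opRe, star_add, ← smul_add]; congr 1; abel

lemma st_resum (C : ℕ → (H →L[ℂ] H)) (n : ℕ) (hC : ∀ j, j < 2 * n → star (C j) = C j) :
    opRe (∑ j ∈ Finset.range (2 * n), Complex.I ^ j • C j) =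
      ∑ m ∈ Finset.range n, ((-1 : ℝ) ^ m) • C (2 * m) := by
  induction n with
  | zero => simp [opRe]
  | succ n ih =>
    rw [show 2 * (n + 1) = 2 * n + 1 + 1 by ring, Finset.sum_range_succ, Finset.sum_range_succ,
      opRe_add, opRe_add, ih (fun j hj => hC j (by omega)), Finset.sum_range_succ, add_assoc]
    congr 1
    have h1 : opRe (Complex.I ^ (2 * n) • C (2 * n)) = ((-1 : ℝ) ^ n) • C (2 * n) := by
      rw [opRe, star_smul, hC _ (by omega), pow_mul, Complex.I_sq, ← Complex.coe_smul]
      simp only [star_pow, star_neg, star_one, ← add_smul, smul_smul]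
      congr 1; push_cast; ring
    have h2 : opRe (Complex.I ^ (2 * n + 1) • C (2 * n + 1)) = 0 := by
      rw [opRe, star_smul, hC _ (by omega), pow_succ, pow_mul, Complex.I_sq, ← add_smul]
      simp
    rw [h1, h2, add_zero]

lemma st_pos (W : H →L[ℂ] H) (h : ∀ x, 0 ≤ (inner ℂ (W x) x).re) : (opRe W).IsPositive := by
  rw [isPositive_def']
  constructor
  · rw [IsSelfAdjoint, opRe, star_smul, star_add, star_star, add_comm]
    simp
  · intro x
    have : (inner ℂ ((opRe W) x) x).re = (inner ℂ (W x) x).re := by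
      have h1 : inner ℂ ((star W) x) x = inner ℂ x (W x) := by
        rw [star_eq_adjoint, adjoint_inner_left]
      have h2 : (inner ℂ x (W x)).re = (inner ℂ (W x) x).re := inner_re_symm (𝕜 := ℂ) _ _
      simp only [opRe, smul_apply, add_apply, inner_smul_left, inner_add_left, h1]
      have h3 : (starRingEnd ℂ) (2 : ℂ)⁻¹ = ((2⁻¹ : ℝ) : ℂ) := by
        rw [map_inv₀, Complex.conj_ofNat]; push_cast; rfl
      rw [h3, Complex.re_ofReal_mul, Complex.add_re, h2]
      ring
    rw [reApplyInnerSelf_apply]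
    change 0 ≤ (inner ℂ ((opRe W) x) x).re
    rw [this]; exact h x

lemma st_pointwise (A B : H →L[ℂ] H) (hA1 : ‖A‖ < 1) (hA : IsSelfAdjoint A)
    (hB : IsSelfAdjoint B) (k : ℕ) (s : ℝ)
    (hs : s ∈ Set.Icc (-1 : ℝ) 1) (x : H) :
    0 ≤ (inner ℂ (((Ring.inverse (1 - (s : ℂ) • A) * B) ^ (4 * k) *
      Ring.inverse (1 - (s : ℂ) • (A + Complex.I • B))) x) x).re := by
  have hR := st_unit' A hA1 s hs
  have hS := st_unit A B hA1 hB s hs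
  have hsw := st_swap_pow A B s Complex.I hR hS (2 * k)
  have hcan := Ring.mul_inverse_cancel _ hS
  set Q := Ring.inverse (1 - (s : ℂ) • A) with hQ
  set N := 1 - (s : ℂ) • (A + Complex.I • B) with hN
  have hQs : star Q = Q := by
    rw [hQ, ← Ring.inverse_star, star_sub, star_one, star_smul, hA.star_eq]; simp
  have hD : star ((Q * B) ^ (2 * k)) = (B * Q) ^ (2 * k) := by
    rw [star_pow, star_mul, hB.star_eq, hQs]
  have e : (Q * B) ^ (4 * k) * Ring.inverse N =
      (Q * B) ^ (2 * k) * (Ring.inverse N * star ((Q * B) ^ (2 * k))) := by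
    rw [hD, ← hsw, ← mul_assoc, ← pow_add]; congr 2; ring
  rw [e]
  set D := (Q * B) ^ (2 * k)
  set y := (star D) x with hy
  set w := (Ring.inverse N) y with hw
  have h1 : inner ℂ ((D * (Ring.inverse N * star D)) x) x = inner ℂ w (N w) := by
    have h3 : N w = y := by
      have := congrArg (fun T : H →L[ℂ] H => T y) hcan
      simpa using this
    rw [h3, hy, star_eq_adjoint, adjoint_inner_right]
    rfl
  rw [h1]
  have h2 : (inner ℂ w (N w)).re = (inner ℂ (N w) w).re := inner_re_symm (𝕜 := ℂ) _ _
  rw [h2]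
  refine le_trans ?_ (st_re_lower A B hB s hs w)
  have : 0 ≤ 1 - ‖A‖ := by linarith
  positivity

/-- The `4k`-tone case of the main theorem: for `f(Y) = P(Y) + ∫ Y^{4k}(I−λY)⁻¹ dμ(λ)`
with `deg P < 4k` and `μ` a finite positive measure on `[−1,1]`, all the relevant operators
are invertible, the Bochner integrals exist, and
`Re f(X) ≥ Σ_{m=0}^{2k−1} ((−1)^m/(2m)!) D^{2m}f(A;B)` for `X = A + iB`. -/
theorem stmt9 [TopologicalSpace.SeparableSpace H] (hinf : ¬ FiniteDimensional ℂ H)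
    (k : ℕ) (hk : 1 ≤ k) (P : Polynomial ℝ) (hP : P.degree < ((4 * k : ℕ) : WithBot ℕ))
    (μ : Measure ℝ) [IsFiniteMeasure μ] (hμ : μ (Set.Icc (-1 : ℝ) 1)ᶜ = 0)
    (A B X : H →L[ℂ] H) (hA : IsSelfAdjoint A) (hB : IsSelfAdjoint B)
    (hspA : spectrum ℂ A ⊆ (fun x : ℝ => (x : ℂ)) '' Set.Ioo (-1 : ℝ) 1)
    (hX : X = A + Complex.I • B) :
    (∀ s ∈ Set.Icc (-1 : ℝ) 1, IsUnit (1 - (s : ℂ) • X)) ∧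
    (∃ δ > (0 : ℝ), ∀ t : ℝ, |t| < δ →
        ∀ s ∈ Set.Icc (-1 : ℝ) 1, IsUnit (1 - (s : ℂ) • (A + t • B))) ∧
    Integrable (fun s : ℝ => X ^ (4 * k) * Ring.inverse (1 - (s : ℂ) • X)) μ ∧
    (∃ δ > (0 : ℝ), ∀ t : ℝ, |t| < δ →
        Integrable
          (fun s : ℝ =>
            (A + t • B) ^ (4 * k) * Ring.inverse (1 - (s : ℂ) • (A + t • B))) μ) ∧
    (opRe (fcal P μ (4 * k) X)
      - ∑ m ∈ Finset.range (2 * k),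
          ((-1 : ℝ) ^ m / (Nat.factorial (2 * m) : ℝ)) •
            iteratedDeriv (2 * m) (fun t : ℝ => fcal P μ (4 * k) (A + t • B)) 0).IsPositive := by
  have hnt : Nontrivial H := by
    by_contra h
    rw [not_nontrivial_iff_subsingleton] at h
    exact hinf inferInstance
  have hA1 := st_norm_lt A hA hspA
  have hU : ∀ s ∈ Set.Icc (-1 : ℝ) 1, IsUnit (1 - (s : ℂ) • (A + Complex.I • B)) :=
    st_unit A B hA1 hB
  have hI : ∀ Y : H →L[ℂ] H, (∀ s ∈ Set.Icc (-1 : ℝ) 1, IsUnit (1 - (s : ℂ) • Y)) →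
      Integrable (fun s : ℝ => Y ^ (4 * k) * Ring.inverse (1 - (s : ℂ) • Y)) μ := fun Y hY =>
    st_int hμ _ (continuousOn_const.mul (st_cont Y _ hY))
  obtain ⟨δ, hδ, hsm⟩ := st_small A B hA1
  have hUt : ∀ t : ℝ, |t| < δ → ∀ s ∈ Set.Icc (-1 : ℝ) 1,
      IsUnit (1 - (s : ℂ) • (A + (t : ℂ) • B)) := fun t ht => st_unit' _ (hsm t ht)
  subst hX
  refine ⟨hU, ⟨δ, hδ, fun t ht => ?_⟩, hI _ hU, ⟨δ, hδ, fun t ht => ?_⟩, ?_⟩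
  · rw [← Complex.coe_smul t B]; exact hUt t ht
  · rw [← Complex.coe_smul t B]; exact hI _ (hUt t ht)
  obtain ⟨C, hC⟩ := st_fcal P (4 * k) hP μ hμ A B hA1
  obtain ⟨e, he⟩ := st_rem (4 * k) μ hμ A B hA1
  set T : ℕ → (H →L[ℂ] H) := fun n => if n < 4 * k then C n else e (n - 4 * k) with hT
  have hser : ∀ᶠ t in 𝓝 (0 : ℝ), HasSum (fun n => t ^ n • T n)
      (fcal P μ (4 * k) (A + t • B)) := by
    have hev : ∀ᶠ t in 𝓝 (0 : ℝ), |t| < δ := by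
      have : ContinuousAt (fun t : ℝ => |t|) 0 := by fun_prop
      exact this.eventually_lt continuousAt_const (by simpa using hδ)
    filter_upwards [he, hev] with t h1 h2
    have := st_shift (4 * k) C e t _ h1
    rw [← Complex.coe_smul t B, hC t (hUt t h2)]
    have hpw : ∀ (j : ℕ) (Z : H →L[ℂ] H), (t : ℂ) ^ j • Z = t ^ j • Z := by
      intro j Z
      rw [← Complex.coe_smul (t ^ j)]; push_cast; rfl
    simp only [hpw]
    exact this
  have hser' : ∀ᶠ t in 𝓝 (0 : ℝ), HasSum (fun n => t ^ n • star (T n))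
      (fcal P μ (4 * k) (A + t • B)) := by
    filter_upwards [hser] with t ht
    have h := ht.star
    have hsa : IsSelfAdjoint (A + t • B) := hA.add ((IsSelfAdjoint.all t).smul hB)
    rw [st_star _ _ _ _ hsa] at h
    simpa only [star_smul, star_trivial] using h
  have hTC : ∀ j, j < 4 * k → T j = C j := fun j hj => if_pos hj
  have hsaC : ∀ j, j < 2 * (2 * k) → star (C j) = C j := by
    intro j hj
    have := st_unique _ _ _ hser hser' j
    rw [hTC j (by omega)] at this
    exact this.symm
  have hsum : ∑ m ∈ Finset.range (2 * k),
          ((-1 : ℝ) ^ m / (Nat.factorial (2 * m) : ℝ)) •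
            iteratedDeriv (2 * m) (fun t : ℝ => fcal P μ (4 * k) (A + t • B)) 0 =
      ∑ m ∈ Finset.range (2 * k), ((-1 : ℝ) ^ m) • C (2 * m) := by
    refine Finset.sum_congr rfl fun m hm => ?_
    have hm' := Finset.mem_range.1 hm
    rw [st_iter _ T hser, hTC _ (by omega), smul_smul, div_mul_cancel₀ _ (by positivity)]
  rw [hsum, ← st_resum C (2 * k) hsaC, hC Complex.I hU, opRe_add,
    show 2 * (2 * k) = 4 * k by ring, add_sub_cancel_left, pow_mul, Complex.I_pow_four, one_pow,
    one_smul]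
  apply st_pos
  intro x
  have hint : Integrable (fun s : ℝ => (Ring.inverse (1 - (s : ℂ) • A) * B) ^ (4 * k) *
      Ring.inverse (1 - (s : ℂ) • (A + Complex.I • B))) μ :=
    st_int hμ _ ((((st_cont A _ (st_unit' A hA1)).mul continuousOn_const).pow _).mul
      (st_cont _ _ hU))
  let L : (H →L[ℂ] H) →L[ℝ] ℝ := Complex.reCLM ∘L
    ((innerSL ℂ x).restrictScalars ℝ ∘L (ContinuousLinearMap.apply ℂ H x).restrictScalars ℝ)
  have hL : ∀ W : H →L[ℂ] H, L W = (inner ℂ (W x) x).re := fun W =>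
    inner_re_symm (𝕜 := ℂ) x (W x)
  rw [← hL, ← L.integral_comp_comm hint]
  refine integral_nonneg_of_ae ?_
  filter_upwards [st_ae hμ] with s hs
  rw [hL]
  exact st_pointwise A B hA1 hA hB k s hs x
end
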